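/- The set of real numbers r with 0 < r < 1 such that there exists a compact packing of the Euclidean plane by disks of radii 1 and r in which both radii are actually used has exactly 9 elements. -/

import Mathlib

open Metric Set

noncomputable section

/-- The Euclidean plane. -/
abbrev Plane : Type := EuclideanSpace ℝ (Fin 2)

/-- A closed disk in the plane, given by its center and (positive) radius. -/
structure Disk where
  center : Plane
  radius : ℝ
  radius_pos : 0 < radius

/-- The set of points of a disk (a closed ball). -/
def Disk.set (d : Disk) : Set Plane := closedBall d.center d.radius

/-- A packing: a family of closed disks with pairwise disjoint interiors. -/
def IsPacking (P : Set Disk) : Prop :=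
  ∀ d ∈ P, ∀ d' ∈ P, d ≠ d' → Disjoint (interior d.set) (interior d'.set)

/-- Two disks are (externally) tangent: they intersect in exactly one point. -/
def Disk.Tangent (d d' : Disk) : Prop :=
  dist d.center d'.center = d.radius + d'.radius

/-- The union of the disks of a packing. -/
def packingUnion (P : Set Disk) : Set Plane := ⋃ d ∈ P, d.set

/-- A packing is compact (triangulated) if every connected component of the
complement of the union of the disks is bounded and its closure meets exactly
three of the disks, these three disks being pairwise tangent. -/
def IsCompactPacking (P : Set Disk) : Prop :=
  IsPacking P ∧
  ∀ x ∈ (packingUnion P)ᶜ,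
    Bornology.IsBounded (connectedComponentIn (packingUnion P)ᶜ x) ∧
    ∃ d₁ d₂ d₃ : Disk, d₁ ∈ P ∧ d₂ ∈ P ∧ d₃ ∈ P ∧
      d₁ ≠ d₂ ∧ d₁ ≠ d₃ ∧ d₂ ≠ d₃ ∧
      d₁.Tangent d₂ ∧ d₁.Tangent d₃ ∧ d₂.Tangent d₃ ∧
      {d ∈ P | (closure (connectedComponentIn (packingUnion P)ᶜ x) ∩ d.set).Nonempty}
        = {d₁, d₂, d₃}

/-- A packing uses the radius `r` if one of its disks has radius `r`. -/
def UsesRadius (P : Set Disk) (r : ℝ) : Prop := ∃ d ∈ P, d.radius = r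

/-- All radii of the disks of `P` belong to `S`. -/
def RadiiIn (P : Set Disk) (S : Set ℝ) : Prop := ∀ d ∈ P, d.radius ∈ S

/-- The square `[-r, r]²`. -/
def square (r : ℝ) : Set Plane := {x | |x 0| ≤ r ∧ |x 1| ≤ r}

/-- The density of a packing: the limsup, as `r → ∞`, of the proportion of the
square `[-r, r]²` covered by the disks. -/
def density (P : Set Disk) : ℝ :=
  Filter.limsup
    (fun r : ℝ => (MeasureTheory.volume (packingUnion P ∩ square r)).toReal / (4 * r ^ 2))
    Filter.atTop

end

/-!
In a compact packing, consecutive disks around a disk `s` are tangent, so the angles that they span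
at the center of `s` add up to `2π`. If `s` is small and touches a large disk, this leaves ten
combinations of neighbors, each of which determines `r`. One of them, five large disks around a
small one, is impossible: it makes the base angles at the large disks equal to `3π / 10`, and these
do not combine with `π / 3` to `2π`.

Conversely, every point has minimal power with respect to some disk of the packing. If each disk is
surrounded by a cycle of pairwise tangent triples whose triangles of centers meet no other disk,
then the point lies in one of the triangles at its minimizing disk, so these triangles cover the
plane, and every hole lies in one of them. For each of the nine ratios this applies to a periodic
packing, where it amounts to identities for the contacts and finitely many inequalities, which
survive the rounding of all coordinates to integer multiples of `10⁻⁴`.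
-/

open Topology

noncomputable section

/-! ### Holes of a packing -/

section Topology

variable {P Q : Set Disk} {r : ℝ}

lemma Disk.interior_set (d : Disk) : interior d.set = ball d.center d.radius :=
  interior_closedBall _ d.radius_pos.ne'

lemma isPacking_iff : IsPacking P ↔
    ∀ d ∈ P, ∀ d' ∈ P, d ≠ d' → d.radius + d'.radius ≤ dist d.center d'.center := by
  simp only [IsPacking, Disk.interior_set,
    disjoint_ball_ball_iff (Disk.radius_pos _) (Disk.radius_pos _)]

lemma Disk.mem_set {d : Disk} {x : Plane} : x ∈ d.set ↔ dist x d.center ≤ d.radius := Iff.rfl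

lemma mem_packingUnion {x : Plane} : x ∈ packingUnion P ↔ ∃ d ∈ P, x ∈ d.set := by
  simp only [packingUnion, mem_iUnion, exists_prop]

/-- Each such disk contains a disk of radius `r` close to `x`, and these smaller disks are still
separated. -/
lemma IsPacking.finite_meeting_closedBall (hP : IsPacking P) (hr : 0 < r)
    (hR : RadiiIn P (Ici r)) (x : Plane) {K : ℝ} (hK : 0 ≤ K) :
    {d ∈ P | (d.set ∩ closedBall x K).Nonempty}.Finite := by
  have hnear : ∀ d ∈ {d ∈ P | (d.set ∩ closedBall x K).Nonempty},
      ∃ y, dist d.center y ≤ d.radius - r ∧ dist y x ≤ r + K := by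
    rintro d ⟨hd, z, hzd, hzx⟩
    have : r ≤ d.radius := hR d hd
    refine exists_dist_le_le (by linarith) (by linarith) ?_
    linarith [dist_triangle_left d.center x z, mem_closedBall.1 hzd, mem_closedBall.1 hzx]
  choose! y hyd hyx using hnear
  obtain ⟨t, ht, hcov⟩ := Metric.totallyBounded_iff.1
    (isCompact_closedBall x (r + K)).totallyBounded r hr
  choose! f hft hfy using fun d hd ↦
    (by simpa using hcov (mem_closedBall.2 (hyx d hd)) : ∃ z ∈ t, dist (y d) z < r)
  refine Set.Finite.of_finite_image (f := f) (ht.subset (image_subset_iff.2 hft)) ?_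
  intro d hd d' hd' hf
  by_contra hne
  have hfy' := hfy d' hd'
  rw [← hf] at hfy'
  linarith [isPacking_iff.1 hP d hd.1 d' hd'.1 hne, hyd d hd, hyd d' hd', hfy d hd,
    dist_triangle4_right d.center d'.center (y d) (y d'),
    dist_triangle_right (y d) (y d') (f d)]

lemma IsPacking.isClosed_packingUnion (hP : IsPacking P) (hr : 0 < r) (hR : RadiiIn P (Ici r))
    (hQ : Q ⊆ P) : IsClosed (packingUnion Q) := by
  rw [packingUnion, biUnion_eq_iUnion]
  refine LocallyFinite.isClosed_iUnion (fun x ↦ ⟨closedBall x 1, closedBall_mem_nhds x one_pos, ?_⟩)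
    fun d ↦ isClosed_closedBall
  refine Set.Finite.of_finite_image (f := Subtype.val)
    ((hP.finite_meeting_closedBall hr hR x zero_le_one).subset ?_) Subtype.val_injective.injOn
  rintro _ ⟨d, hd, rfl⟩
  exact ⟨hQ d.2, hd⟩

/-- The hole of `P` containing the point `x`: its connected component in the complement of the
disks. -/
abbrev hole (P : Set Disk) (x : Plane) : Set Plane := connectedComponentIn (packingUnion P)ᶜ x

/-- The disks of `P` that touch the hole of `P` containing `x`. -/
def touching (P : Set Disk) (x : Plane) : Set Disk :=
  {d ∈ P | (closure (hole P x) ∩ d.set).Nonempty}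

variable {x y : Plane}

lemma mem_hole_of_mem_closure (hP : IsClosed (packingUnion P)) (hy : y ∈ closure (hole P x))
    (hy' : y ∉ packingUnion P) : y ∈ hole P x := by
  have hmem : y ∈ hole P y := mem_connectedComponentIn hy'
  obtain ⟨z, hzy, hzx⟩ :=
    mem_closure_iff.1 hy _ hP.isOpen_compl.connectedComponentIn hmem
  rwa [hole, connectedComponentIn_eq hzx, ← connectedComponentIn_eq hzy]

lemma subset_hole_of_isPreconnected {K : Set Plane} (hK : IsPreconnected K)
    (hP : IsClosed (packingUnion P)) (hne : (K ∩ hole P x).Nonempty)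
    (hdisj : ∀ d ∈ touching P x, Disjoint K d.set) : K ⊆ hole P x := by
  refine hK.subset_of_closure_inter_subset hP.isOpen_compl.connectedComponentIn hne ?_
  rintro y ⟨hy, hyK⟩
  refine mem_hole_of_mem_closure hP hy fun hyP ↦ ?_
  obtain ⟨d, hd, hyd⟩ := mem_packingUnion.1 hyP
  exact disjoint_left.1 (hdisj d ⟨hd, y, hy, hyd⟩) hyK hyd

lemma Disk.Tangent.symm {d d' : Disk} (h : d.Tangent d') : d'.Tangent d := by
  rw [Disk.Tangent, dist_comm, h, add_comm]

lemma Disk.Tangent.ne {d d' : Disk} (h : d.Tangent d') : d ≠ d' := by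
  rintro rfl
  rw [Disk.Tangent, dist_self] at h
  linarith [d.radius_pos]

lemma IsCompactPacking.pairwise_touching_tangent (hP : IsCompactPacking P)
    (hx : x ∉ packingUnion P) : (touching P x).Pairwise Disk.Tangent := by
  obtain ⟨-, d₁, d₂, d₃, -, -, -, -, -, -, h₁₂, h₁₃, h₂₃, heq⟩ := hP.2 x hx
  rw [touching, heq]
  rintro d (rfl | rfl | rfl) d' (rfl | rfl | rfl) hne <;>
    first | exact absurd rfl hne | assumption | (apply Disk.Tangent.symm; assumption)

lemma IsCompactPacking.ncard_touching (hP : IsCompactPacking P) (hx : x ∉ packingUnion P) :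
    (touching P x).ncard = 3 := by
  obtain ⟨-, d₁, d₂, d₃, -, -, -, h₁₂, h₁₃, h₂₃, -, -, -, heq⟩ := hP.2 x hx
  rw [touching, heq]
  exact Set.ncard_eq_three.2 ⟨d₁, d₂, d₃, h₁₂, h₁₃, h₂₃, rfl⟩

lemma IsCompactPacking.touching_eq (hP : IsCompactPacking P) (hx : x ∉ packingUnion P)
    {d₁ d₂ d₃ : Disk} (h₁ : d₁ ∈ touching P x) (h₂ : d₂ ∈ touching P x) (h₃ : d₃ ∈ touching P x)
    (h₁₂ : d₁ ≠ d₂) (h₁₃ : d₁ ≠ d₃) (h₂₃ : d₂ ≠ d₃) : touching P x = {d₁, d₂, d₃} := by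
  have hcard := hP.ncard_touching hx
  refine (Set.eq_of_subset_of_ncard_le (by simp [insert_subset_iff, h₁, h₂, h₃]) ?_
    (finite_of_ncard_ne_zero (by omega))).symm
  rw [hcard, Set.ncard_eq_three.2 ⟨d₁, d₂, d₃, h₁₂, h₁₃, h₂₃, rfl⟩]

lemma IsCompactPacking.exists_touching_ne (hP : IsCompactPacking P) (hx : x ∉ packingUnion P)
    (d₁ d₂ : Disk) : ∃ d ∈ touching P x, d ≠ d₁ ∧ d ≠ d₂ := by
  have hlt : ({d₁, d₂} : Set Disk).ncard < (touching P x).ncard := by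
    rw [hP.ncard_touching hx]
    exact (Set.ncard_insert_le d₁ {d₂}).trans_lt (by simp)
  obtain ⟨d, hd, hne⟩ := exists_mem_notMem_of_ncard_lt_ncard hlt
  exact ⟨d, hd, by simpa using hne⟩

end Topology

/-! ### Tangency directions and coronas -/

section Polar

/-- The unit vector `(cos θ, sin θ)`, for polar coordinates around the center of a disk. -/
def direction (θ : ℝ) : Plane := !₂[Real.cos θ, Real.sin θ]

@[fun_prop]
lemma continuous_direction : Continuous direction := by
  unfold direction
  fun_prop

lemma direction_periodic : Function.Periodic direction (2 * Real.pi) := fun θ ↦ by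
  simp only [direction, Real.cos_add_two_pi, Real.sin_add_two_pi]

lemma direction_ne_zero (θ : ℝ) : direction θ ≠ 0 := by
  intro h
  have h₀ := congrArg (· 0) h
  have h₁ := congrArg (· 1) h
  simp only [direction, PiLp.zero_apply, PiLp.toLp_apply, Matrix.cons_val_zero,
    Matrix.cons_val_one] at h₀ h₁
  simpa [h₀, h₁] using Real.cos_sq_add_sin_sq θ

lemma dist_sq_eq (x y : Plane) : dist x y ^ 2 = (x 0 - y 0) ^ 2 + (x 1 - y 1) ^ 2 := by
  rw [EuclideanSpace.dist_sq_eq, Fin.sum_univ_two, Real.dist_eq, Real.dist_eq, sq_abs, sq_abs]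

variable (c : Plane)

lemma dist_polar_sq (a b θ φ : ℝ) :
    dist (c + a • direction θ) (c + b • direction φ) ^ 2 =
      a ^ 2 + b ^ 2 - 2 * a * b * Real.cos (φ - θ) := by
  rw [dist_sq_eq, Real.cos_sub]
  simp only [direction, PiLp.add_apply, PiLp.smul_apply, smul_eq_mul, Matrix.cons_val_zero,
    Matrix.cons_val_one]
  linear_combination a ^ 2 * Real.sin_sq_add_cos_sq θ + b ^ 2 * Real.sin_sq_add_cos_sq φ

lemma dist_polar_self {a : ℝ} (ha : 0 ≤ a) (θ : ℝ) : dist (c + a • direction θ) c = a := by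
  have h := dist_polar_sq c a 0 θ θ
  rw [zero_smul, add_zero] at h
  exact (sq_eq_sq₀ dist_nonneg ha).1 (by rw [h]; ring)

lemma exists_eq_polar (x : Plane) (α : ℝ) :
    ∃ θ ∈ Ico α (α + 2 * Real.pi), x = c + dist x c • direction θ := by
  set z : ℂ := ⟨x 0 - c 0, x 1 - c 1⟩
  have hnorm : ‖z‖ = dist x c := by
    rw [← sq_eq_sq₀ (norm_nonneg _) dist_nonneg, Complex.sq_norm, Complex.normSq_apply, dist_sq_eq]
    ring
  obtain ⟨θ, hθ, harg⟩ := direction_periodic.exists_mem_Ico Real.two_pi_pos z.arg α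
  have hre : dist x c * Real.cos z.arg = x 0 - c 0 := hnorm ▸ Complex.norm_mul_cos_arg z
  have him : dist x c * Real.sin z.arg = x 1 - c 1 := hnorm ▸ Complex.norm_mul_sin_arg z
  refine ⟨θ, hθ, ?_⟩
  rw [← harg]
  ext i
  fin_cases i
  · change x 0 = c 0 + dist x c * Real.cos z.arg
    linarith
  · change x 1 = c 1 + dist x c * Real.sin z.arg
    linarith

end Polar

section Neighbors

/-- `d` is tangent to `s` from outside, its center lying in direction `θ` from the center of
`s`. -/
def Disk.TangentAt (s d : Disk) (θ : ℝ) : Prop :=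
  d.center = s.center + (s.radius + d.radius) • direction θ

variable {P : Set Disk} {r : ℝ} {s d d' : Disk} {θ φ : ℝ}

lemma Disk.TangentAt.tangent (h : s.TangentAt d θ) : s.Tangent d := by
  rw [Disk.Tangent, h, dist_comm, dist_polar_self _ (add_pos s.radius_pos d.radius_pos).le]

lemma Disk.Tangent.exists_tangentAt (h : s.Tangent d) (α : ℝ) :
    ∃ θ ∈ Ico α (α + 2 * Real.pi), s.TangentAt d θ := by
  obtain ⟨θ, hθ, heq⟩ := exists_eq_polar s.center d.center α
  exact ⟨θ, hθ, by rwa [dist_comm, h] at heq⟩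

lemma Disk.TangentAt.add_two_pi (h : s.TangentAt d θ) : s.TangentAt d (θ + 2 * Real.pi) := by
  rwa [Disk.TangentAt, direction_periodic]

lemma Disk.TangentAt.dist_center_sq (h : s.TangentAt d θ) (t φ : ℝ) :
    dist (s.center + t • direction φ) d.center ^ 2 =
      t ^ 2 + (s.radius + d.radius) ^ 2
        - 2 * t * (s.radius + d.radius) * Real.cos (θ - φ) := by
  rw [h, dist_polar_sq]

lemma Disk.TangentAt.boundary_mem_set (h : s.TangentAt d θ) :
    s.center + s.radius • direction θ ∈ d.set := by
  have hsq := h.dist_center_sq s.radius θ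
  rw [sub_self, Real.cos_zero] at hsq
  exact (abs_le_of_sq_le_sq' (by rw [hsq]; linarith) d.radius_pos.le).2

lemma IsPacking.eq_of_tangentAt (hP : IsPacking P) (hd : d ∈ P) (hd' : d' ∈ P)
    (h : s.TangentAt d θ) (h' : s.TangentAt d' θ) : d = d' := by
  by_contra hne
  have hdist := isPacking_iff.1 hP d hd d' hd' hne
  have hsq := dist_polar_sq s.center (s.radius + d.radius) (s.radius + d'.radius) θ θ
  rw [← h, ← h', sub_self, Real.cos_zero] at hsq
  nlinarith [d.radius_pos, d'.radius_pos]

lemma Disk.TangentAt.cos_sub_eq_one (h : s.TangentAt d θ) (h' : s.TangentAt d φ) :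
    Real.cos (φ - θ) = 1 := by
  have hsq := dist_polar_sq s.center (s.radius + d.radius) (s.radius + d.radius) θ φ
  rw [← h, ← h', dist_self] at hsq
  have hpos : 0 < s.radius + d.radius := add_pos s.radius_pos d.radius_pos
  have hprod : (s.radius + d.radius) ^ 2 * (1 - Real.cos (φ - θ)) = 0 := by linarith
  linarith [(mul_eq_zero.1 hprod).resolve_left (by positivity)]

lemma Disk.TangentAt.eq_of_lt_two_pi (h : s.TangentAt d θ) (h' : s.TangentAt d φ) (hle : θ ≤ φ)
    (hlt : φ < θ + 2 * Real.pi) : φ = θ := by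
  linarith [(Real.cos_eq_one_iff_of_lt_of_lt (by linarith [Real.pi_pos]) (by linarith)).1
    (h.cos_sub_eq_one h')]

lemma IsPacking.tangentAt_of_boundary_mem (hP : IsPacking P) (hs : s ∈ P) (hd : d ∈ P)
    (hne : d ≠ s) (hmem : s.center + s.radius • direction φ ∈ d.set) : s.TangentAt d φ := by
  have hsep : d.radius + s.radius ≤ dist d.center s.center := isPacking_iff.1 hP d hd s hs hne
  obtain ⟨ψ, -, hψ⟩ := exists_eq_polar s.center d.center 0
  have hsq := dist_polar_sq s.center s.radius (dist d.center s.center) φ ψ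
  rw [← hψ] at hsq
  have hle := pow_le_pow_left₀ dist_nonneg (Disk.mem_set.1 hmem) 2
  have hs0 := s.radius_pos
  have hcos := Real.cos_le_one (ψ - φ)
  have hdist : dist d.center s.center = s.radius + d.radius := by
    nlinarith [mul_nonneg (mul_nonneg hs0.le (dist_nonneg (x := d.center) (y := s.center)))
      (sub_nonneg.2 hcos), d.radius_pos]
  have hcos_eq : Real.cos (ψ - φ) = 1 := by
    refine le_antisymm hcos ?_
    have : 0 < s.radius * (s.radius + d.radius) := mul_pos hs0 (add_pos hs0 d.radius_pos)
    rw [hdist] at hsq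
    nlinarith
  rw [hdist] at hψ
  have hzero := dist_polar_sq s.center (s.radius + d.radius) (s.radius + d.radius) φ ψ
  rw [← hψ, hcos_eq] at hzero
  exact (dist_eq_zero.1 (pow_eq_zero_iff two_ne_zero |>.1 (by rw [hzero]; ring))).symm

/-- The angle at the center of the disk of radius `ρ` in the triangle formed by the centers of
three pairwise tangent disks of radii `ρ`, `a` and `b`. -/
def tangencyAngle (ρ a b : ℝ) : ℝ := Real.arccos (1 - 2 * a * b / ((ρ + a) * (ρ + b)))

lemma tangencyAngle_comm (ρ a b : ℝ) : tangencyAngle ρ a b = tangencyAngle ρ b a := by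
  rw [tangencyAngle, tangencyAngle]
  ring_nf

lemma Disk.TangentAt.cos_sub_of_tangent (h : s.TangentAt d θ) (h' : s.TangentAt d' φ)
    (ht : d.Tangent d') : Real.cos (φ - θ) =
      1 - 2 * d.radius * d'.radius / ((s.radius + d.radius) * (s.radius + d'.radius)) := by
  have hsq := dist_polar_sq s.center (s.radius + d.radius) (s.radius + d'.radius) θ φ
  rw [← h, ← h', ht] at hsq
  have := s.radius_pos
  have := d.radius_pos
  have := d'.radius_pos
  field_simp
  linarith

end Neighbors

section Gap

variable {P : Set Disk} {r : ℝ} {s d d' : Disk} {θ φ : ℝ}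

lemma eventually_sector_notMem_packingUnion (hP : IsPacking P) (hr : 0 < r)
    (hR : RadiiIn P (Ici r)) (hs : s ∈ P) {K : Set ℝ} (hK : IsCompact K)
    (hfree : ∀ ψ ∈ K, ∀ e ∈ P, ¬ s.TangentAt e ψ) :
    ∀ᶠ t in 𝓝[>] s.radius, ∀ ψ ∈ K, s.center + t • direction ψ ∉ packingUnion P := by
  have hothers : ∀ᶠ t in 𝓝 s.radius, ∀ ψ ∈ K,
      s.center + t • direction ψ ∉ packingUnion (P \ {s}) := by
    refine hK.eventually_forall_of_forall_eventually fun ψ hψ ↦ ?_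
    have hcont : Continuous fun p : ℝ × ℝ ↦ s.center + p.1 • direction p.2 := by fun_prop
    refine hcont.continuousAt.eventually
      ((hP.isClosed_packingUnion hr hR sdiff_subset).isOpen_compl.mem_nhds fun hmem ↦ ?_)
    obtain ⟨e, ⟨he, hes⟩, hmem⟩ := mem_packingUnion.1 hmem
    exact hfree ψ hψ e he (hP.tangentAt_of_boundary_mem hs he hes hmem)
  filter_upwards [hothers.filter_mono nhdsWithin_le_nhds, self_mem_nhdsWithin]
    with t ht hlt ψ hψ hmem
  obtain ⟨e, he, hmem⟩ := mem_packingUnion.1 hmem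
  obtain rfl | hes := eq_or_ne e s
  · rw [Disk.mem_set, dist_polar_self _ (e.radius_pos.trans hlt).le] at hmem
    exact hmem.not_gt hlt
  · exact ht ψ hψ (mem_packingUnion.2 ⟨e, ⟨he, hes⟩, hmem⟩)

/-- An arc of the boundary of `s` without tangency points is bordered by a single hole. -/
lemma exists_hole_along_arc (hP : IsPacking P) (hr : 0 < r) (hR : RadiiIn P (Ici r)) (hs : s ∈ P)
    (hlt : θ < φ) (hfree : ∀ ψ ∈ Ioo θ φ, ∀ e ∈ P, ¬ s.TangentAt e ψ) :
    ∃ x ∉ packingUnion P, ∀ ψ ∈ Ioo θ φ,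
      ∀ᶠ t in 𝓝[>] s.radius, s.center + t • direction ψ ∈ hole P x := by
  obtain ⟨μ, hμ⟩ := exists_between hlt
  have hsector : ∀ ψ ∈ Ioo θ φ, ∃ δ > s.radius, ∀ t ∈ Ioo s.radius δ, ∀ ω ∈ uIcc μ ψ,
      s.center + t • direction ω ∉ packingUnion P := fun ψ hψ ↦
    mem_nhdsGT_iff_exists_Ioo_subset.1 (eventually_sector_notMem_packingUnion hP hr hR hs
      isCompact_uIcc fun ω hω ↦ hfree ω (ordConnected_Ioo.uIcc_subset hμ hψ hω))
  have hjoin : ∀ ψ δ, (∀ t ∈ Ioo s.radius δ, ∀ ω ∈ uIcc μ ψ,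
      s.center + t • direction ω ∉ packingUnion P) → ∀ t ∈ Ioo s.radius δ, ∀ u ∈ Ioo s.radius δ,
      s.center + u • direction ψ ∈ hole P (s.center + t • direction μ) := by
    intro ψ δ hδ t ht u hu
    have hconn : IsPreconnected
        ((fun p : ℝ × ℝ ↦ s.center + p.1 • direction p.2) '' (Ioo s.radius δ ×ˢ uIcc μ ψ)) :=
      (isPreconnected_Ioo.prod isPreconnected_uIcc).image _ (by fun_prop)
    refine hconn.subset_connectedComponentIn ⟨(t, μ), ⟨ht, left_mem_uIcc⟩, rfl⟩ ?_
      ⟨(u, ψ), ⟨hu, right_mem_uIcc⟩, rfl⟩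
    rintro _ ⟨⟨v, ω⟩, ⟨hv, hω⟩, rfl⟩
    exact hδ v hv ω hω
  obtain ⟨δ₀, hδ₀, hfree₀⟩ := hsector μ hμ
  obtain ⟨t₀, ht₀⟩ := exists_between hδ₀
  refine ⟨_, hfree₀ t₀ ht₀ μ left_mem_uIcc, fun ψ hψ ↦ ?_⟩
  obtain ⟨δ, hδ, hfreeδ⟩ := hsector ψ hψ
  obtain ⟨t, ht⟩ := exists_between (lt_min hδ₀ hδ)
  have htδ₀ : t ∈ Ioo s.radius δ₀ := ⟨ht.1, ht.2.trans_le (min_le_left _ _)⟩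
  have htδ : t ∈ Ioo s.radius δ := ⟨ht.1, ht.2.trans_le (min_le_right _ _)⟩
  filter_upwards [Ioo_mem_nhdsGT hδ] with u hu
  rw [hole, connectedComponentIn_eq (hjoin μ δ₀ (fun v hv ω hω ↦ hfree₀ v hv ω hω) t₀ ht₀ t htδ₀)]
  exact hjoin ψ δ hfreeδ t htδ u hu

lemma arc_subset_closure_hole {x : Plane} (hlt : θ < φ)
    (hx : ∀ ψ ∈ Ioo θ φ, ∀ᶠ t in 𝓝[>] s.radius, s.center + t • direction ψ ∈ hole P x)
    {ψ : ℝ} (hψ : ψ ∈ Icc θ φ) : s.center + s.radius • direction ψ ∈ closure (hole P x) := by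
  have hopen : ∀ ω ∈ Ioo θ φ, s.center + s.radius • direction ω ∈ closure (hole P x) := by
    intro ω hω
    have hcont : Continuous fun t : ℝ ↦ s.center + t • direction ω := by fun_prop
    exact mem_closure_of_tendsto (hcont.continuousAt.mono_left nhdsWithin_le_nhds) (hx ω hω)
  have hcont : Continuous fun ω ↦ s.center + s.radius • direction ω := by fun_prop
  rw [← closure_Ioo hlt.ne] at hψ
  simpa only [closure_closure] using map_mem_closure hcont hψ hopen

end Gap

section Consecutive

/-- `d` and `d'` are tangent to `s` in the directions `θ < φ`, and no disk of `P` is tangent to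
`s` in a direction strictly between; `d = d'` is possible only if `φ = θ + 2π`. -/
structure ConsecutiveNeighbors (P : Set Disk) (s d d' : Disk) (θ φ : ℝ) : Prop where
  lt : θ < φ
  le_add_two_pi : φ ≤ θ + 2 * Real.pi
  mem_center : s ∈ P
  mem_left : d ∈ P
  mem_right : d' ∈ P
  tangentAt_left : s.TangentAt d θ
  tangentAt_right : s.TangentAt d' φ
  free : ∀ ψ ∈ Ioo θ φ, ∀ e ∈ P, ¬ s.TangentAt e ψ

variable {P : Set Disk} {r : ℝ} {s d d' : Disk} {θ φ : ℝ}

lemma ConsecutiveNeighbors.exists_hole (h : ConsecutiveNeighbors P s d d' θ φ) (hP : IsPacking P)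
    (hr : 0 < r) (hR : RadiiIn P (Ici r)) :
    ∃ x ∉ packingUnion P, s ∈ touching P x ∧ d ∈ touching P x ∧ d' ∈ touching P x ∧
      ∀ ψ ∈ Ioo θ φ, ∀ᶠ t in 𝓝[>] s.radius, s.center + t • direction ψ ∈ hole P x := by
  obtain ⟨x, hx, hhole⟩ := exists_hole_along_arc hP hr hR h.mem_center h.lt h.free
  have hleft := arc_subset_closure_hole h.lt hhole (left_mem_Icc.2 h.lt.le)
  have hright := arc_subset_closure_hole h.lt hhole (right_mem_Icc.2 h.lt.le)
  exact ⟨x, hx, ⟨h.mem_center, _, hleft, (dist_polar_self _ s.radius_pos.le _).le⟩,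
    ⟨h.mem_left, _, hleft, h.tangentAt_left.boundary_mem_set⟩,
    ⟨h.mem_right, _, hright, h.tangentAt_right.boundary_mem_set⟩, hhole⟩

lemma ConsecutiveNeighbors.ne (h : ConsecutiveNeighbors P s d d' θ φ) (hP : IsCompactPacking P)
    (hr : 0 < r) (hR : RadiiIn P (Ici r)) : d ≠ d' := by
  rintro rfl
  obtain ⟨x, hx, hs, -, -, -⟩ := h.exists_hole hP.1 hr hR
  obtain ⟨e, he, hes, hed⟩ := hP.exists_touching_ne hx s d
  obtain ⟨ψ, hψ, heψ⟩ :=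
    (hP.pairwise_touching_tangent hx hs he hes.symm).exists_tangentAt θ
  have hφ : φ = θ + 2 * Real.pi := h.le_add_two_pi.antisymm <| le_of_not_gt fun hlt ↦
    h.lt.ne' (h.tangentAt_left.eq_of_lt_two_pi h.tangentAt_right h.lt.le hlt)
  obtain rfl | hθψ := hψ.1.eq_or_lt
  · exact hed (hP.1.eq_of_tangentAt he.1 h.mem_left heψ h.tangentAt_left)
  · exact h.free ψ ⟨hθψ, hφ ▸ hψ.2⟩ e he.1 heψ

lemma ConsecutiveNeighbors.tangent (h : ConsecutiveNeighbors P s d d' θ φ)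
    (hP : IsCompactPacking P) (hr : 0 < r) (hR : RadiiIn P (Ici r)) : d.Tangent d' := by
  obtain ⟨x, hx, -, hd, hd', -⟩ := h.exists_hole hP.1 hr hR
  exact hP.pairwise_touching_tangent hx hd hd' (h.ne hP hr hR)

lemma Disk.TangentAt.disjoint_ray (h : s.TangentAt d θ) (hcos : Real.cos (θ - φ) ≤ 0) :
    Disjoint ((fun t : ℝ ↦ s.center + t • direction φ) '' Ioi s.radius) d.set := by
  rw [disjoint_left]
  rintro _ ⟨t, ht, rfl⟩ hmem
  have hsq := h.dist_center_sq t φ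
  have hle := pow_le_pow_left₀ dist_nonneg (Disk.mem_set.1 hmem) 2
  have hs := s.radius_pos
  have hd := d.radius_pos
  have ht0 : 0 < t := hs.trans ht
  nlinarith [mul_nonneg (mul_pos ht0 (add_pos hs hd)).le (neg_nonneg.2 hcos)]

lemma not_isBounded_ray (c : Plane) {v : Plane} (hv : v ≠ 0) (a : ℝ) :
    ¬ Bornology.IsBounded ((fun t : ℝ ↦ c + t • v) '' Ioi a) := by
  intro hb
  obtain ⟨K, hK⟩ := hb.subset_closedBall c
  have hv' := norm_pos_iff.2 hv
  set t := |a| + 1 + |K| / ‖v‖ with ht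
  have hat : a < t := by linarith [le_abs_self a, show 0 ≤ |K| / ‖v‖ by positivity]
  have hmem := hK ⟨t, hat, rfl⟩
  rw [mem_closedBall, dist_self_add_left, norm_smul, Real.norm_of_nonneg (by positivity), ht,
    add_mul, div_mul_cancel₀ _ hv'.ne'] at hmem
  nlinarith [le_abs_self K, mul_nonneg (abs_nonneg a) hv'.le]

/-- Otherwise the bisecting ray would stay in the hole, which is bounded. -/
lemma ConsecutiveNeighbors.sub_le_pi (h : ConsecutiveNeighbors P s d d' θ φ)
    (hP : IsCompactPacking P) (hr : 0 < r) (hR : RadiiIn P (Ici r)) : φ - θ ≤ Real.pi := by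
  by_contra! hgt
  obtain ⟨x, hx, hs, hd, hd', hhole⟩ := h.exists_hole hP.1 hr hR
  set μ := (θ + φ) / 2 with hμ
  have hle := h.le_add_two_pi
  have hcos : Real.cos (φ - μ) ≤ 0 :=
    Real.cos_nonpos_of_pi_div_two_le_of_le (by linarith) (by linarith [Real.pi_pos])
  have hcos' : Real.cos (θ - μ) ≤ 0 := by
    rwa [← Real.cos_neg, show -(θ - μ) = φ - μ by rw [hμ]; ring]
  have hray : (fun t : ℝ ↦ s.center + t • direction μ) '' Ioi s.radius ⊆ hole P x := by
    refine subset_hole_of_isPreconnected (isPreconnected_Ioi.image _ (by fun_prop))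
      (hP.1.isClosed_packingUnion hr hR subset_rfl) ?_ fun e he ↦ ?_
    · obtain ⟨t, hmem, ht⟩ := ((hhole μ ⟨by linarith [h.lt], by linarith [h.lt]⟩).and
        self_mem_nhdsWithin).exists
      exact ⟨_, ⟨t, ht, rfl⟩, hmem⟩
    · rw [hP.touching_eq hx hs hd hd' h.tangentAt_left.tangent.ne h.tangentAt_right.tangent.ne
        (h.ne hP hr hR)] at he
      obtain rfl | rfl | rfl := he
      · rw [disjoint_left]
        rintro _ ⟨t, ht, rfl⟩ hmem
        rw [Disk.mem_set, dist_polar_self _ (e.radius_pos.trans ht).le] at hmem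
        exact hmem.not_gt ht
      · exact h.tangentAt_left.disjoint_ray hcos'
      · exact h.tangentAt_right.disjoint_ray hcos
  exact not_isBounded_ray _ (direction_ne_zero _) _ ((hP.2 x hx).1.subset hray)

lemma ConsecutiveNeighbors.sub_eq_tangencyAngle (h : ConsecutiveNeighbors P s d d' θ φ)
    (hP : IsCompactPacking P) (hr : 0 < r) (hR : RadiiIn P (Ici r)) :
    φ - θ = tangencyAngle s.radius d.radius d'.radius := by
  rw [tangencyAngle,
    ← h.tangentAt_left.cos_sub_of_tangent h.tangentAt_right (h.tangent hP hr hR),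
    Real.arccos_cos (sub_nonneg.2 h.lt.le) (h.sub_le_pi hP hr hR)]

end Consecutive

section Corona

/-- The disks `d 0, d 1, …, d n = d 0` of `P` are the disks tangent to `s`, in cyclic order: each
one is tangent to the next, and the angles they subtend at the center of `s` add up to `2π`. -/
structure IsCorona (P : Set Disk) (s : Disk) (n : ℕ) (d : ℕ → Disk) : Prop where
  mem : ∀ i ≤ n, d i ∈ P
  tangent : ∀ i ≤ n, s.Tangent (d i)
  tangent_succ : ∀ i < n, (d i).Tangent (d (i + 1))
  last_eq : d n = d 0
  exists_eq : ∀ e ∈ P, s.Tangent e → ∃ i ≤ n, d i = e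
  sum_angle : ∑ i ∈ Finset.range n,
    tangencyAngle s.radius (d i).radius (d (i + 1)).radius = 2 * Real.pi

lemma exists_increasing_enumeration {α : Type*} [LinearOrder α] {S : Set α} (hS : S.Finite)
    {a b : α} (ha : IsLeast S a) (hb : IsGreatest S b) :
    ∃ (n : ℕ) (f : ℕ → α), f 0 = a ∧ f n = b ∧ (∀ i ≤ n, f i ∈ S) ∧
      (∀ x ∈ S, ∃ i ≤ n, f i = x) ∧
      ∀ i < n, f i < f (i + 1) ∧ Disjoint (Ioo (f i) (f (i + 1))) S := by
  classical
  obtain ⟨T, rfl⟩ := hS.exists_finset_coe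
  obtain ⟨n, hn⟩ : ∃ n, T.card = n + 1 :=
    Nat.exists_eq_succ_of_ne_zero (Finset.card_ne_zero_of_mem ha.1)
  set g := T.orderEmbOfFin hn with hg
  have hrange : ∀ x ∈ T, ∃ j, g j = x := fun x hx ↦ by
    simpa only [hg, mem_range] using
      (T.range_orderEmbOfFin hn).symm.subset (Finset.mem_coe.2 hx)
  have hmem : ∀ j, g j ∈ T := T.orderEmbOfFin_mem hn
  refine ⟨n, fun i ↦ g (Fin.ofNat (n + 1) i), ?_, ?_, fun i _ ↦ hmem _, fun x hx ↦ ?_,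
    fun i hi ↦ ?_⟩
  · obtain ⟨j, hj⟩ := hrange a ha.1
    exact le_antisymm (hj ▸ g.monotone (Fin.zero_le j)) (ha.2 (hmem _))
  · obtain ⟨j, hj⟩ := hrange b hb.1
    refine le_antisymm (hb.2 (hmem _)) (hj ▸ g.monotone ?_)
    rw [Fin.le_def, Fin.val_ofNat, Nat.mod_eq_of_lt n.lt_succ_self]
    exact j.is_le
  · obtain ⟨j, hj⟩ := hrange x hx
    exact ⟨j, j.is_le, by simpa only [Fin.ofNat_eq_cast, Fin.cast_val_eq_self] using hj⟩
  · have hi₀ : (Fin.ofNat (n + 1) i : ℕ) = i := Nat.mod_eq_of_lt (by omega)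
    have hi₁ : (Fin.ofNat (n + 1) (i + 1) : ℕ) = i + 1 := Nat.mod_eq_of_lt (by omega)
    refine ⟨g.strictMono (by rw [Fin.lt_def]; omega), disjoint_left.2 ?_⟩
    rintro x ⟨hx₀, hx₁⟩ hx
    obtain ⟨j, rfl⟩ := hrange x hx
    rw [g.lt_iff_lt, Fin.lt_def] at hx₀ hx₁
    omega

variable {P : Set Disk} {r : ℝ} {s d₀ : Disk} {θ₀ : ℝ}

instance : Nonempty Disk := ⟨⟨0, 1, one_pos⟩⟩

lemma IsPacking.finite_tangent_directions (hP : IsPacking P) (hr : 0 < r)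
    (hR : RadiiIn P (Ici r)) (s : Disk) (θ₀ : ℝ) :
    {θ ∈ Icc θ₀ (θ₀ + 2 * Real.pi) | ∃ d ∈ P, s.TangentAt d θ}.Finite := by
  set S := {θ ∈ Ico θ₀ (θ₀ + 2 * Real.pi) | ∃ d ∈ P, s.TangentAt d θ}
  choose! f hfP hf using fun θ (hθ : θ ∈ S) ↦ hθ.2
  have hS_finite : S.Finite := by
    refine Set.Finite.of_finite_image (f := f) ((hP.finite_meeting_closedBall hr hR s.center
      s.radius_pos.le).subset ?_) fun θ hθ φ hφ heq ↦ ?_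
    · rintro _ ⟨θ, hθ, rfl⟩
      exact ⟨hfP θ hθ, _, (hf θ hθ).boundary_mem_set, (dist_polar_self _ s.radius_pos.le θ).le⟩
    · have hθd := hf θ hθ
      have hφd := hf φ hφ
      rw [← heq] at hφd
      obtain ⟨⟨hθ₁, hθ₂⟩, -⟩ := hθ
      obtain ⟨⟨hφ₁, hφ₂⟩, -⟩ := hφ
      obtain hle | hle := le_total θ φ
      · exact (hθd.eq_of_lt_two_pi hφd hle (by linarith)).symm
      · exact hφd.eq_of_lt_two_pi hθd hle (by linarith)
  refine (hS_finite.insert (θ₀ + 2 * Real.pi)).subset fun θ hθ ↦ ?_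
  obtain heq | hlt := hθ.1.2.eq_or_lt
  · exact .inl heq
  · exact .inr ⟨⟨hθ.1.1, hlt⟩, hθ.2⟩

theorem IsCompactPacking.exists_isCorona (hP : IsCompactPacking P) (hr : 0 < r)
    (hR : RadiiIn P (Ici r)) (hs : s ∈ P) (hd₀ : d₀ ∈ P) (ht : s.Tangent d₀) :
    ∃ n d, IsCorona P s n d := by
  obtain ⟨θ₀, -, hθ₀⟩ := ht.exists_tangentAt 0
  set S := {θ ∈ Icc θ₀ (θ₀ + 2 * Real.pi) | ∃ d ∈ P, s.TangentAt d θ}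
  have hle : θ₀ ≤ θ₀ + 2 * Real.pi := by linarith [Real.pi_pos]
  obtain ⟨n, f, hf0, hfn, hfS, hfsurj, hf⟩ := exists_increasing_enumeration
    (hP.1.finite_tangent_directions hr hR s θ₀)
    (a := θ₀) (b := θ₀ + 2 * Real.pi) ⟨⟨left_mem_Icc.2 hle, d₀, hd₀, hθ₀⟩, fun θ hθ ↦ hθ.1.1⟩
    ⟨⟨right_mem_Icc.2 hle, d₀, hd₀, hθ₀.add_two_pi⟩, fun θ hθ ↦ hθ.1.2⟩
  choose! d hdP hd using fun i (hi : i ≤ n) ↦ (hfS i hi).2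
  have hcons : ∀ i < n, ConsecutiveNeighbors P s (d i) (d (i + 1)) (f i) (f (i + 1)) := by
    intro i hi
    have hi₀ := hfS i hi.le
    have hi₁ := hfS (i + 1) hi
    refine ⟨(hf i hi).1, by linarith [hi₀.1.1, hi₁.1.2], hs, hdP i hi.le, hdP (i + 1) hi,
      hd i hi.le, hd (i + 1) hi, fun ψ hψ e he heψ ↦ ?_⟩
    exact disjoint_left.1 (hf i hi).2 hψ
      ⟨⟨hi₀.1.1.trans hψ.1.le, hψ.2.le.trans hi₁.1.2⟩, e, he, heψ⟩
  have hd_eq : ∀ e ∈ P, ∀ i ≤ n, s.TangentAt e (f i) → d i = e := fun e he i hi h ↦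
    hP.1.eq_of_tangentAt (hdP i hi) he (hd i hi) h
  refine ⟨n, d, hdP, fun i hi ↦ (hd i hi).tangent, fun i hi ↦ (hcons i hi).tangent hP hr hR,
    ?_, fun e he het ↦ ?_, ?_⟩
  · rw [hd_eq d₀ hd₀ n le_rfl (hfn ▸ hθ₀.add_two_pi), hd_eq d₀ hd₀ 0 n.zero_le (hf0 ▸ hθ₀)]
  · obtain ⟨θ, hθ, heθ⟩ := het.exists_tangentAt θ₀
    obtain ⟨i, hi, rfl⟩ := hfsurj θ ⟨Ico_subset_Icc_self hθ, e, he, heθ⟩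
    exact ⟨i, hi, hd_eq e he i hi heθ⟩
  · rw [← Finset.sum_congr rfl fun i hi ↦
      (hcons i (Finset.mem_range.1 hi)).sub_eq_tangencyAngle hP hr hR, Finset.sum_range_sub, hfn,
      hf0, add_sub_cancel_left]

end Corona

/-! ### The possible ratios -/

section MixedTangency

lemma exists_openSegment_disjoint {E : Type*} [NormedAddCommGroup E] [NormedSpace ℝ E]
    {A B : Set E} (hA : IsCompact A) (hB : IsCompact B) (hA' : A.Nonempty) (hB' : B.Nonempty)
    (hAB : Disjoint A B) : ∃ p ∈ A, ∃ q ∈ B, Disjoint (openSegment ℝ p q) (A ∪ B) := by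
  obtain ⟨⟨p, q⟩, ⟨hp, hq⟩, hmin⟩ := (hA.prod hB).exists_isMinOn (hA'.prod hB')
    (f := fun z : E × E ↦ dist z.1 z.2) (by fun_prop)
  have hmin' : ∀ a ∈ A, ∀ b ∈ B, dist p q ≤ dist a b := fun a ha b hb ↦
    hmin (show (a, b) ∈ A ×ˢ B from ⟨ha, hb⟩)
  have hpq : 0 < dist p q := dist_pos.2 (hAB.ne_of_mem hp hq)
  refine ⟨p, hp, q, hq, ?_⟩
  rw [openSegment_eq_image_lineMap, disjoint_left]
  rintro _ ⟨t, ⟨ht₀, ht₁⟩, rfl⟩ (hz | hz)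
  · have hle := hmin' _ hz q hq
    rw [dist_lineMap_right, Real.norm_of_nonneg (by linarith)] at hle
    nlinarith
  · have hle := hmin' p hp _ hz
    rw [dist_left_lineMap, Real.norm_of_nonneg ht₀.le] at hle
    nlinarith

variable {P Q : Set Disk} {r : ℝ}

lemma IsPacking.tangent_of_mem_inter (hP : IsPacking P) {d d' : Disk} (hd : d ∈ P) (hd' : d' ∈ P)
    (hne : d ≠ d') {x : Plane} (hx : x ∈ d.set) (hx' : x ∈ d'.set) : d.Tangent d' :=
  (isPacking_iff.1 hP d hd d' hd' hne).antisymm'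
    ((dist_triangle_left _ _ x).trans (add_le_add hx hx'))

lemma IsCompactPacking.tangent_of_openSegment_subset (hP : IsCompactPacking P) {d d' : Disk}
    (hd : d ∈ P) (hd' : d' ∈ P) (hne : d ≠ d') {p q : Plane} (hp : p ∈ d.set) (hq : q ∈ d'.set)
    (hfree : openSegment ℝ p q ⊆ (packingUnion P)ᶜ) : d.Tangent d' := by
  obtain ⟨x, hx⟩ : (openSegment ℝ p q).Nonempty := ⟨_, midpoint_mem_openSegment ..⟩
  have hclosure : segment ℝ p q ⊆ closure (hole P x) := by
    rw [← closure_openSegment]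
    exact closure_mono
      ((convex_openSegment p q).isPreconnected.subset_connectedComponentIn hx hfree)
  exact hP.pairwise_touching_tangent (hfree hx) ⟨hd, p, hclosure (left_mem_segment ..), hp⟩
    ⟨hd', q, hclosure (right_mem_segment ..), hq⟩ hne

lemma IsCompactPacking.exists_tangent_sdiff (hP : IsCompactPacking P) (hr : 0 < r)
    (hR : RadiiIn P (Ici r)) (hQP : Q ⊆ P) (hQ : Q.Nonempty) (hQ' : (P \ Q).Nonempty) :
    ∃ d ∈ Q, ∃ e ∈ P \ Q, d.Tangent e := by
  obtain ⟨a, ha⟩ := hQ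
  obtain ⟨b, hb⟩ := hQ'
  have hI : IsCompact (segment ℝ a.center b.center) := by
    rw [← convexHull_pair]
    exact (toFinite _).isCompact_convexHull ℝ
  set I := segment ℝ a.center b.center
  have hcenter : ∀ d : Disk, d.center ∈ d.set := fun d ↦ mem_closedBall_self d.radius_pos.le
  by_cases hAB : Disjoint (I ∩ packingUnion Q) (I ∩ packingUnion (P \ Q))
  · obtain ⟨p, ⟨hpI, hpQ⟩, q, ⟨hqI, hqQ⟩, hpq⟩ := exists_openSegment_disjoint
      (hI.inter_right (hP.1.isClosed_packingUnion hr hR hQP))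
      (hI.inter_right (hP.1.isClosed_packingUnion hr hR sdiff_subset))
      ⟨a.center, left_mem_segment .., mem_packingUnion.2 ⟨a, ha, hcenter a⟩⟩
      ⟨b.center, right_mem_segment .., mem_packingUnion.2 ⟨b, hb, hcenter b⟩⟩ hAB
    obtain ⟨d, hd, hpd⟩ := mem_packingUnion.1 hpQ
    obtain ⟨e, he, hqe⟩ := mem_packingUnion.1 hqQ
    have hfree : openSegment ℝ p q ⊆ (packingUnion P)ᶜ := by
      intro z hz hzP
      obtain ⟨k, hk, hzk⟩ := mem_packingUnion.1 hzP
      have hzI : z ∈ I :=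
        (convex_segment _ _).segment_subset hpI hqI (openSegment_subset_segment ℝ _ _ hz)
      refine disjoint_left.1 hpq hz ?_
      by_cases hkQ : k ∈ Q
      · exact .inl ⟨hzI, mem_packingUnion.2 ⟨k, hkQ, hzk⟩⟩
      · exact .inr ⟨hzI, mem_packingUnion.2 ⟨k, ⟨hk, hkQ⟩, hzk⟩⟩
    exact ⟨d, hd, e, he, hP.tangent_of_openSegment_subset (hQP hd) he.1
      (by rintro rfl; exact he.2 hd) hpd hqe hfree⟩
  · obtain ⟨x, ⟨-, hxQ⟩, -, hxQ'⟩ := not_disjoint_iff.1 hAB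
    obtain ⟨d, hd, hxd⟩ := mem_packingUnion.1 hxQ
    obtain ⟨e, he, hxe⟩ := mem_packingUnion.1 hxQ'
    exact ⟨d, hd, e, he, hP.1.tangent_of_mem_inter (hQP hd) he.1
      (by rintro rfl; exact he.2 hd) hxd hxe⟩

end MixedTangency

section CoronaCode

open Finset in
lemma even_card_changes_iff (p : ℕ → Prop) [DecidablePred p] (n : ℕ) :
    Even #{i ∈ range n | ¬(p i ↔ p (i + 1))} ↔ (p 0 ↔ p n) := by
  induction n with
  | zero => simp
  | succ n ih =>
    rw [range_add_one, filter_insert]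
    split_ifs with h
    · rw [ih]
      tauto
    · rw [card_insert_of_notMem (by simp), Nat.even_add_one, ih]
      tauto

/-- The disk `s` has a corona in `P` with disks of radii `u` and `v` only, in which `a`, `b` and
`c` are the numbers of pairs of consecutive disks with radii `u, u`, with one radius `u` and one
radius `v`, and with radii `v, v`. -/
structure HasCoronaCode (P : Set Disk) (s : Disk) (u v : ℝ) (a b c : ℕ) : Prop where
  angle_eq : a * tangencyAngle s.radius u u + b * tangencyAngle s.radius u v
    + c * tangencyAngle s.radius v v = 2 * Real.pi
  even_mixed : Even b
  radius_eq : b = 0 → ∀ e ∈ P, ∀ e' ∈ P, s.Tangent e → s.Tangent e' → e.radius = e'.radius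
  exists_left : a ≠ 0 → ∃ e ∈ P, s.Tangent e ∧ e.radius = u
  exists_right_right : c ≠ 0 →
    ∃ e ∈ P, ∃ e' ∈ P, s.Tangent e ∧ s.Tangent e' ∧ e.Tangent e' ∧ e.radius = v ∧ e'.radius = v

variable {P : Set Disk} {s : Disk} {r u v : ℝ} {n : ℕ} {d : ℕ → Disk}

lemma IsCorona.radius_eq_or (h : IsCorona P s n d) (hI : RadiiIn P {u, v}) {i : ℕ} (hi : i ≤ n) :
    (d i).radius = u ∨ (d i).radius = v :=
  hI _ (h.mem i hi)

open Classical Finset in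
lemma IsCorona.angle_eq (h : IsCorona P s n d) (hI : RadiiIn P {u, v}) (huv : u ≠ v) :
    #{i ∈ range n | (d i).radius = u ∧ (d (i + 1)).radius = u} * tangencyAngle s.radius u u
    + #{i ∈ range n | ¬((d i).radius = u ↔ (d (i + 1)).radius = u)} * tangencyAngle s.radius u v
    + #{i ∈ range n | (d i).radius = v ∧ (d (i + 1)).radius = v} * tangencyAngle s.radius v v
      = 2 * Real.pi := by
  simp only [← nsmul_eq_mul, ← sum_const, sum_filter, ← sum_add_distrib, ← h.sum_angle]
  refine sum_congr rfl fun i hi ↦ ?_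
  rw [Finset.mem_range] at hi
  obtain hi₀ | hi₀ := h.radius_eq_or hI hi.le <;>
    obtain hi₁ | hi₁ := h.radius_eq_or hI (Nat.succ_le_of_lt hi) <;>
    simp [hi₀, hi₁, huv, huv.symm, tangencyAngle_comm s.radius v u]

open Classical Finset in
lemma IsCorona.radius_eq (h : IsCorona P s n d) (hI : RadiiIn P {u, v})
    (hmixed : #{i ∈ range n | ¬((d i).radius = u ↔ (d (i + 1)).radius = u)} = 0) :
    ∀ e ∈ P, ∀ e' ∈ P, s.Tangent e → s.Tangent e' → e.radius = e'.radius := by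
  have hconst : ∀ i ≤ n, ((d 0).radius = u ↔ (d i).radius = u) := by
    intro i hi
    rw [← even_card_changes_iff (fun j ↦ (d j).radius = u), card_eq_zero.2]
    · exact Even.zero
    · rw [filter_eq_empty_iff]
      exact fun j hj ↦ filter_eq_empty_iff.1 (card_eq_zero.1 hmixed)
        (range_mono hi hj)
  intro e he e' he' het het'
  obtain ⟨i, hi, rfl⟩ := h.exists_eq e he het
  obtain ⟨j, hj, rfl⟩ := h.exists_eq e' he' het'
  have hij := (hconst i hi).symm.trans (hconst j hj)
  obtain hu | hv := h.radius_eq_or hI hi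
  · rw [hu, hij.1 hu]
  · obtain hu' | hv' := h.radius_eq_or hI hj
    · rw [hu', hij.2 hu']
    · rw [hv, hv']

lemma IsCompactPacking.exists_hasCoronaCode (hP : IsCompactPacking P) (hr : 0 < r)
    (hR : RadiiIn P (Ici r)) (hI : RadiiIn P {u, v}) (huv : u ≠ v) {e : Disk} (hs : s ∈ P)
    (he : e ∈ P) (hse : s.Tangent e) : ∃ a b c, HasCoronaCode P s u v a b c := by
  classical
  obtain ⟨n, d, h⟩ := hP.exists_isCorona hr hR hs he hse
  refine ⟨_, _, _, h.angle_eq hI huv, ?_, h.radius_eq hI, fun ha ↦ ?_, fun hc ↦ ?_⟩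
  · rw [even_card_changes_iff fun i ↦ (d i).radius = u, h.last_eq]
  · obtain ⟨i, hi⟩ := Finset.card_ne_zero.1 ha
    obtain ⟨hin, hiu, -⟩ := Finset.mem_filter.1 hi
    rw [Finset.mem_range] at hin
    exact ⟨d i, h.mem i hin.le, h.tangent i hin.le, hiu⟩
  · obtain ⟨i, hi⟩ := Finset.card_ne_zero.1 hc
    obtain ⟨hin, hiv⟩ := Finset.mem_filter.1 hi
    rw [Finset.mem_range] at hin
    exact ⟨d i, h.mem i hin.le, d (i + 1), h.mem _ hin, h.tangent i hin.le, h.tangent _ hin,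
      h.tangent_succ i hin, hiv⟩

end CoronaCode

section Classification

/-- The possible coronas of a small disk tangent to a large one, other than five large disks: the
numbers of consecutive pairs large-large, large-small and small-small. -/
def coronaCodes : Finset (ℕ × ℕ × ℕ) :=
  {(3, 0, 0), (4, 0, 0), (1, 2, 1), (2, 2, 0), (1, 2, 2), (0, 4, 1), (2, 2, 1), (1, 4, 0),
    (3, 2, 0)}

/-- The angles seen from a disk of radius `r` with corona code `(a, b, c)` for the radii `1` and
`r` add up to a full turn. -/
def CoronaEquation (k : ℕ × ℕ × ℕ) (r : ℝ) : Prop :=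
  k.1 * tangencyAngle r 1 1 + k.2.1 * tangencyAngle r 1 r + k.2.2 * tangencyAngle r r r
    = 2 * Real.pi

lemma tangencyAngle_self {r : ℝ} (hr : 0 < r) : tangencyAngle r r r = Real.pi / 3 := by
  have hcos : 1 - 2 * r * r / ((r + r) * (r + r)) = Real.cos (Real.pi / 3) := by
    rw [Real.cos_pi_div_three]
    field_simp
    ring
  rw [tangencyAngle, hcos, Real.arccos_cos (by positivity) (by linarith [Real.pi_pos])]

lemma tangencyAngle_self_right {r : ℝ} (hr : 0 < r) (a : ℝ) :
    tangencyAngle r a r = Real.arccos (1 - a / (r + a)) := by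
  unfold tangencyAngle
  congr 2
  rw [show 2 * a * r = a * (r + r) by ring, mul_div_mul_right _ _ (by positivity)]

lemma tangencyAngle_one_one (r : ℝ) :
    tangencyAngle r 1 1 = Real.arccos (1 - 2 / (r + 1) ^ 2) := by
  unfold tangencyAngle
  congr 2
  ring

lemma two_div_add_one_sq_lt_two {r : ℝ} (hr : 0 < r) : 2 / (r + 1) ^ 2 < 2 := by
  rw [div_lt_iff₀ (by positivity)]
  nlinarith

lemma one_div_add_one_lt_one {r : ℝ} (hr : 0 < r) : 1 / (r + 1) < 1 := by
  rw [div_lt_one (by positivity)]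
  linarith

lemma strictAntiOn_tangencyAngle_one_one :
    StrictAntiOn (fun r : ℝ ↦ tangencyAngle r 1 1) (Ioi 0) := by
  intro r (hr : 0 < r) s (hs : 0 < s) hrs
  have h : 2 / (s + 1) ^ 2 < 2 / (r + 1) ^ 2 := by gcongr
  have h₂ := two_div_add_one_sq_lt_two hr
  have h₀ : 0 < 2 / (s + 1) ^ 2 := by positivity
  simp only [tangencyAngle_one_one]
  exact Real.strictAntiOn_arccos ⟨by linarith, by linarith⟩ ⟨by linarith, by linarith⟩
    (by linarith)

lemma strictAntiOn_tangencyAngle_one_self :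
    StrictAntiOn (fun r : ℝ ↦ tangencyAngle r 1 r) (Ioi 0) := by
  intro r (hr : 0 < r) s (hs : 0 < s) hrs
  have h : 1 / (s + 1) < 1 / (r + 1) := by gcongr
  have h₁ := one_div_add_one_lt_one hr
  have h₀ : 0 < 1 / (s + 1) := by positivity
  simp only [tangencyAngle_self_right hr, tangencyAngle_self_right hs]
  exact Real.strictAntiOn_arccos ⟨by linarith, by linarith⟩ ⟨by linarith, by linarith⟩
    (by linarith)

lemma pi_div_three_lt_tangencyAngle_one_one {r : ℝ} (hr : 0 < r) (hr₁ : r < 1) :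
    Real.pi / 3 < tangencyAngle r 1 1 := by
  simpa only [tangencyAngle_self one_pos] using
    strictAntiOn_tangencyAngle_one_one hr (mem_Ioi.2 one_pos) hr₁

lemma pi_div_three_lt_tangencyAngle_one_self {r : ℝ} (hr : 0 < r) (hr₁ : r < 1) :
    Real.pi / 3 < tangencyAngle r 1 r := by
  simpa only [tangencyAngle_self one_pos] using
    strictAntiOn_tangencyAngle_one_self hr (mem_Ioi.2 one_pos) hr₁

lemma tangencyAngle_one_one_lt_pi {r : ℝ} (hr : 0 < r) : tangencyAngle r 1 1 < Real.pi := by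
  rw [tangencyAngle_one_one]
  refine (Real.arccos_le_pi _).lt_of_ne fun h ↦ ?_
  linarith [Real.arccos_eq_pi.1 h, two_div_add_one_sq_lt_two hr]

lemma tangencyAngle_one_self_lt_pi_div_two {r : ℝ} (hr : 0 < r) :
    tangencyAngle r 1 r < Real.pi / 2 := by
  rw [tangencyAngle_self_right hr, Real.arccos_lt_pi_div_two]
  linarith [one_div_add_one_lt_one hr]

lemma CoronaEquation.le {k : ℕ × ℕ × ℕ} (hk : k.1 ≠ 0 ∨ k.2.1 ≠ 0) {r s : ℝ} (hr : 0 < r)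
    (hs : 0 < s) (h : CoronaEquation k r) (h' : CoronaEquation k s) : s ≤ r := by
  by_contra! hlt
  have hA := strictAntiOn_tangencyAngle_one_one (mem_Ioi.2 hr) (mem_Ioi.2 hs) hlt
  have hB := strictAntiOn_tangencyAngle_one_self (mem_Ioi.2 hr) (mem_Ioi.2 hs) hlt
  dsimp only at hA hB
  rw [CoronaEquation, tangencyAngle_self hr] at h
  rw [CoronaEquation, tangencyAngle_self hs] at h'
  obtain h₀ | h₀ := hk <;> have := Nat.cast_pos (α := ℝ).2 (Nat.pos_of_ne_zero h₀)
  · nlinarith [mul_lt_mul_of_pos_left hA this,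
      mul_le_mul_of_nonneg_left hB.le (Nat.cast_nonneg (α := ℝ) k.2.1)]
  · nlinarith [mul_lt_mul_of_pos_left hB this,
      mul_le_mul_of_nonneg_left hA.le (Nat.cast_nonneg (α := ℝ) k.1)]

lemma CoronaEquation.eq {k : ℕ × ℕ × ℕ} (hk : k.1 ≠ 0 ∨ k.2.1 ≠ 0) {r s : ℝ} (hr : 0 < r)
    (hs : 0 < s) (h : CoronaEquation k r) (h' : CoronaEquation k s) : r = s :=
  le_antisymm (h'.le hk hs hr h) (h.le hk hr hs h')

lemma mem_coronaCodes_or_eq {A B p : ℝ} (hp : 0 < p) (hA : p / 3 < A) (hB : p / 3 < B)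
    (hA' : A < p) (hB' : B < p / 2) {a b c : ℕ} (h : a * A + b * B + c * (p / 3) = 2 * p)
    (hb : Even b) (hbc : b = 0 → c = 0) :
    (a, b, c) ∈ coronaCodes ∨ (a, b, c) = (5, 0, 0) := by
  have h6 : a + b + c ≤ 6 := by
    by_contra! hgt
    have : (7 : ℝ) ≤ a + b + c := by exact_mod_cast hgt
    have : (a : ℝ) * (p / 3) ≤ a * A := by gcongr
    have : (b : ℝ) * (p / 3) ≤ b * B := by gcongr
    nlinarith
  have ha6 : a ≤ 6 := by lia
  have hb6 : b ≤ 6 := by lia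
  have hc6 : c ≤ 6 := by lia
  interval_cases b <;> interval_cases a <;> interval_cases c <;>
    first | lia | exact absurd hb (by decide) | decide | (exfalso; norm_num at h; linarith)

/-- The angle sum of the isosceles triangle formed by the centers of two unit disks and a disk of
radius `r`, pairwise tangent. -/
lemma two_mul_tangencyAngle_one {r : ℝ} (hr : 0 < r) :
    2 * tangencyAngle 1 1 r = Real.pi - tangencyAngle r 1 1 := by
  have h₁ := one_div_add_one_lt_one hr
  have h₂ := two_div_add_one_sq_lt_two hr
  have h₀ : 0 < 1 / (r + 1) := by positivity
  have hβ : tangencyAngle 1 1 r = Real.arccos (1 / (r + 1)) := by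
    rw [tangencyAngle_comm, tangencyAngle_self_right one_pos]
    congr 1
    field_simp
    ring
  have hβ' : tangencyAngle 1 1 r ≤ Real.pi / 2 := by
    rw [hβ, Real.arccos_le_pi_div_two]
    exact h₀.le
  refine Real.injOn_cos ⟨by linarith [Real.arccos_nonneg (1 / (r + 1))], by linarith⟩
    ⟨?_, ?_⟩ ?_
  · linarith [tangencyAngle_one_one_lt_pi hr]
  · rw [tangencyAngle_one_one]
    linarith [Real.arccos_nonneg (1 - 2 / (r + 1) ^ 2)]
  · have h₃ : 0 < 2 / (r + 1) ^ 2 := by positivity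
    rw [Real.cos_two_mul, Real.cos_pi_sub, hβ, tangencyAngle_one_one,
      Real.cos_arccos (by linarith) h₁.le, Real.cos_arccos (by linarith) (by linarith), div_pow]
    ring

lemma not_five_mul_tangencyAngle {r : ℝ} (hr : 0 < r)
    (hA : 5 * tangencyAngle r 1 1 = 2 * Real.pi) {a b : ℕ} (hb : Even b) (hb₀ : b ≠ 0) :
    a * tangencyAngle 1 1 1 + b * tangencyAngle 1 1 r ≠ 2 * Real.pi := by
  intro h
  have hβ : tangencyAngle 1 1 r = 3 * Real.pi / 10 := by linarith [two_mul_tangencyAngle_one hr]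
  rw [tangencyAngle_self one_pos, hβ] at h
  have h60 : (10 * a + 9 * b : ℝ) = 60 :=
    mul_right_cancel₀ Real.pi_ne_zero (by linear_combination 30 * h)
  have : 10 * a + 9 * b = 60 := by exact_mod_cast h60
  obtain ⟨m, rfl⟩ := hb
  lia

variable {P : Set Disk} {r : ℝ} {s e : Disk}

lemma IsCompactPacking.coronaEquation_or_five (hP : IsCompactPacking P) (hr : 0 < r) (hr₁ : r < 1)
    (hR : RadiiIn P {1, r}) (hs : s ∈ P) (hsr : s.radius = r) (he : e ∈ P) (he₁ : e.radius = 1)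
    (hse : s.Tangent e) : (∃ k ∈ coronaCodes, CoronaEquation k r) ∨
      5 * tangencyAngle r 1 1 = 2 * Real.pi ∧ ∀ d ∈ P, s.Tangent d → d.radius = 1 := by
  have hR' : RadiiIn P (Ici r) := fun d hd ↦ (hR d hd).elim (fun h ↦ h ▸ hr₁.le) fun h ↦ h.ge
  obtain ⟨a, b, c, h⟩ := hP.exists_hasCoronaCode hr hR' hR hr₁.ne' hs he hse
  have heq := h.angle_eq
  rw [hsr] at heq
  have hbc : b = 0 → c = 0 := by
    intro hb
    by_contra hc
    obtain ⟨d, hd, -, -, hsd, -, -, hdr, -⟩ := h.exists_right_right hc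
    exact hr₁.ne (hdr.symm.trans ((h.radius_eq hb d hd e he hsd hse).trans he₁))
  obtain hk | hk := mem_coronaCodes_or_eq Real.pi_pos (pi_div_three_lt_tangencyAngle_one_one hr hr₁)
    (pi_div_three_lt_tangencyAngle_one_self hr hr₁) (tangencyAngle_one_one_lt_pi hr)
    (tangencyAngle_one_self_lt_pi_div_two hr) (tangencyAngle_self hr ▸ heq) h.even_mixed hbc
  · exact .inl ⟨_, hk, heq⟩
  · simp only [Prod.mk.injEq] at hk
    obtain ⟨rfl, rfl, rfl⟩ := hk
    exact .inr ⟨by simpa using heq, fun d hd hsd ↦ (h.radius_eq rfl d hd e he hsd hse).trans he₁⟩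

theorem IsCompactPacking.exists_coronaEquation (hP : IsCompactPacking P) (hr : 0 < r) (hr₁ : r < 1)
    (hR : RadiiIn P {1, r}) (h₁ : UsesRadius P 1) (hr' : UsesRadius P r) :
    ∃ k ∈ coronaCodes, CoronaEquation k r := by
  by_contra! hno
  have hR' : RadiiIn P (Ici r) := fun d hd ↦ (hR d hd).elim (fun h ↦ h ▸ hr₁.le) fun h ↦ h.ge
  have hfive {s e : Disk} (hs : s ∈ P) (hsr : s.radius = r) (he : e ∈ P) (he₁ : e.radius = 1)
      (hse : s.Tangent e) := (hP.coronaEquation_or_five hr hr₁ hR hs hsr he he₁ hse).resolve_left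
    fun ⟨k, hk, h⟩ ↦ hno k hk h
  obtain ⟨l, ⟨hl, hl₁⟩, s, ⟨hs, hs₁⟩, hls⟩ := hP.exists_tangent_sdiff (Q := {d ∈ P | d.radius = 1})
    hr hR' (sep_subset ..) h₁ (hr'.imp fun d hd ↦ ⟨hd.1, fun h ↦ hr₁.ne (hd.2.symm.trans h.2)⟩)
  have hsr : s.radius = r := (hR s hs).resolve_left fun h ↦ hs₁ ⟨hs, h⟩
  obtain ⟨a, b, c, h⟩ := hP.exists_hasCoronaCode hr hR' hR hr₁.ne' hl hs hls
  have hc : c = 0 := by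
    by_contra hc
    obtain ⟨d, hd, d', hd', hld, -, hdd', hdr, hdr'⟩ := h.exists_right_right hc
    exact hr₁.ne (hdr'.symm.trans ((hfive hd hdr hl hl₁ hld.symm).2 d' hd' hdd'))
  have hb : b ≠ 0 := by
    intro hb
    have ha : a = 0 := by
      by_contra ha
      obtain ⟨d, hd, hld, hd₁⟩ := h.exists_left ha
      exact hr₁.ne (hsr.symm.trans ((h.radius_eq hb s hs d hd hls hld).trans hd₁))
    have := h.angle_eq
    simp [ha, hb, hc, Real.pi_ne_zero] at this
  refine not_five_mul_tangencyAngle hr (hfive hs hsr hl hl₁ hls.symm).1 h.even_mixed hb (a := a) ?_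
  simpa [hl₁, hc] using h.angle_eq

/-- The ratios `r < 1` of compact packings that use exactly the radii `1` and `r`. -/
def compactRatios : Set ℝ :=
  {r | 0 < r ∧ r < 1 ∧
    ∃ P : Set Disk, IsCompactPacking P ∧ RadiiIn P {1, r} ∧ UsesRadius P 1 ∧ UsesRadius P r}

lemma exists_injOn_mapsTo_coronaCodes :
    ∃ f : ℝ → ℕ × ℕ × ℕ, MapsTo f compactRatios coronaCodes ∧ InjOn f compactRatios := by
  have hcode : ∀ r ∈ compactRatios, ∃ k ∈ coronaCodes, CoronaEquation k r :=
    fun r ⟨hr, hr₁, P, hP, hR, h₁, hr'⟩ ↦ hP.exists_coronaEquation hr hr₁ hR h₁ hr'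
  have hne : ∀ k ∈ coronaCodes, k.1 ≠ 0 ∨ k.2.1 ≠ 0 := by decide
  choose! f hf using hcode
  refine ⟨f, fun r hr ↦ (hf r hr).1, fun r hr s hs hrs ↦ ?_⟩
  exact (hf r hr).2.eq (hne _ (hf r hr).1) hr.1 hs.1 (hrs ▸ (hf s hs).2)

theorem finite_compactRatios : compactRatios.Finite :=
  have ⟨_, hmaps, hinj⟩ := exists_injOn_mapsTo_coronaCodes
  .of_injOn hmaps hinj coronaCodes.finite_toSet

theorem ncard_compactRatios_le : compactRatios.ncard ≤ 9 := by
  obtain ⟨f, hmaps, hinj⟩ := exists_injOn_mapsTo_coronaCodes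
  calc compactRatios.ncard ≤ (coronaCodes : Set (ℕ × ℕ × ℕ)).ncard :=
        ncard_le_ncard_of_injOn f hmaps hinj coronaCodes.finite_toSet
    _ = 9 := by rw [ncard_coe_finset]; rfl

end Classification

/-! ### The power criterion for compactness -/

section Triangle

/-- The determinant of two plane vectors. -/
def cross (v w : Plane) : ℝ := v 0 * w 1 - v 1 * w 0

/-- Twice the signed area of the triangle `p q x`: positive when `x` is on the left of `p q`. -/
def doubleArea (p q x : Plane) : ℝ := cross (q - p) (x - p)

/-- The closed triangle with counterclockwise vertices `p`, `q`, `w`. -/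
def closedTriangle (p q w : Plane) : Set Plane :=
  {x | 0 ≤ doubleArea p q x ∧ 0 ≤ doubleArea q w x ∧ 0 ≤ doubleArea w p x}

/-- The open triangle with counterclockwise vertices `p`, `q`, `w`. -/
def openTriangle (p q w : Plane) : Set Plane :=
  {x | 0 < doubleArea p q x ∧ 0 < doubleArea q w x ∧ 0 < doubleArea w p x}

variable {p q w x : Plane}

lemma continuous_doubleArea (p q : Plane) : Continuous (doubleArea p q) := by
  unfold doubleArea cross
  fun_prop

lemma doubleArea_rotate (p q x : Plane) : doubleArea q x p = doubleArea p q x := by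
  simp only [doubleArea, cross, PiLp.sub_apply]
  ring

lemma doubleArea_add_doubleArea_add_doubleArea (p q w x : Plane) :
    doubleArea p q x + doubleArea q w x + doubleArea w p x = doubleArea p q w := by
  simp only [doubleArea, cross, PiLp.sub_apply]
  ring

lemma doubleArea_smul_eq (p q w x : Plane) :
    doubleArea p q w • x = doubleArea q w x • p + doubleArea w p x • q + doubleArea p q x • w := by
  ext i
  fin_cases i <;>
    simp only [doubleArea, cross, PiLp.sub_apply, PiLp.add_apply, PiLp.smul_apply, smul_eq_mul,
      Fin.zero_eta, Fin.mk_one] <;> ring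

lemma exists_barycentric (hD : 0 < doubleArea p q w) (x : Plane) :
    ∃ α β γ : ℝ, α + β + γ = 1 ∧ x = α • p + β • q + γ • w ∧
      doubleArea q w x = α * doubleArea p q w ∧ doubleArea w p x = β * doubleArea p q w ∧
      doubleArea p q x = γ * doubleArea p q w := by
  refine ⟨doubleArea q w x / doubleArea p q w, doubleArea w p x / doubleArea p q w,
    doubleArea p q x / doubleArea p q w, ?_, ?_, ?_, ?_, ?_⟩
  · rw [← doubleArea_add_doubleArea_add_doubleArea p q w x] at hD ⊢
    field_simp
    ring
  · calc x = (doubleArea p q w)⁻¹ • doubleArea p q w • x := (inv_smul_smul₀ hD.ne' x).symm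
      _ = _ := by rw [doubleArea_smul_eq]; simp only [smul_add, smul_smul, div_eq_inv_mul]
  all_goals rw [div_mul_cancel₀ _ hD.ne']

lemma exists_barycentric_of_mem_closedTriangle (hD : 0 < doubleArea p q w)
    (hx : x ∈ closedTriangle p q w) :
    ∃ α β γ : ℝ, 0 ≤ α ∧ 0 ≤ β ∧ 0 ≤ γ ∧ α + β + γ = 1 ∧ x = α • p + β • q + γ • w := by
  obtain ⟨α, β, γ, hsum, hxe, hα, hβ, hγ⟩ := exists_barycentric hD x
  obtain ⟨h₁, h₂, h₃⟩ := hx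
  exact ⟨α, β, γ, nonneg_of_mul_nonneg_left (hα ▸ h₂) hD, nonneg_of_mul_nonneg_left (hβ ▸ h₃) hD,
    nonneg_of_mul_nonneg_left (hγ ▸ h₁) hD, hsum, hxe⟩

lemma isClosed_closedTriangle (p q w : Plane) : IsClosed (closedTriangle p q w) :=
  (isClosed_le continuous_const (continuous_doubleArea p q)).inter
    ((isClosed_le continuous_const (continuous_doubleArea q w)).inter
      (isClosed_le continuous_const (continuous_doubleArea w p)))

lemma isOpen_openTriangle (p q w : Plane) : IsOpen (openTriangle p q w) :=
  (isOpen_lt continuous_const (continuous_doubleArea p q)).inter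
    ((isOpen_lt continuous_const (continuous_doubleArea q w)).inter
      (isOpen_lt continuous_const (continuous_doubleArea w p)))

lemma openTriangle_subset_closedTriangle : openTriangle p q w ⊆ closedTriangle p q w :=
  fun _ h ↦ ⟨h.1.le, h.2.1.le, h.2.2.le⟩

lemma closure_openTriangle_subset : closure (openTriangle p q w) ⊆ closedTriangle p q w :=
  closure_minimal openTriangle_subset_closedTriangle (isClosed_closedTriangle p q w)

lemma closedTriangle_rotate (hx : x ∈ closedTriangle p q w) : x ∈ closedTriangle q w p :=
  ⟨hx.2.1, hx.2.2, hx.1⟩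

lemma isBounded_closedTriangle (hD : 0 < doubleArea p q w) :
    Bornology.IsBounded (closedTriangle p q w) := by
  refine isBounded_iff_forall_norm_le.2 ⟨‖p‖ + ‖q‖ + ‖w‖, fun x hx ↦ ?_⟩
  obtain ⟨α, β, γ, hα, hβ, hγ, hsum, rfl⟩ := exists_barycentric_of_mem_closedTriangle hD hx
  calc ‖α • p + β • q + γ • w‖ ≤ α * ‖p‖ + β * ‖q‖ + γ * ‖w‖ := by
        simpa only [norm_smul, Real.norm_of_nonneg, hα, hβ, hγ] using
          norm_add₃_le (a := α • p) (b := β • q) (c := γ • w)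
    _ ≤ 1 * ‖p‖ + 1 * ‖q‖ + 1 * ‖w‖ := by gcongr <;> linarith
    _ = ‖p‖ + ‖q‖ + ‖w‖ := by simp only [one_mul]

lemma mem_segment_of_doubleArea_eq_zero (hD : 0 < doubleArea p q w)
    (hx : x ∈ closedTriangle p q w) (h₀ : doubleArea p q x = 0) : x ∈ segment ℝ p q := by
  obtain ⟨α, β, γ, hsum, rfl, hα, hβ, hγ⟩ := exists_barycentric hD x
  obtain rfl : γ = 0 := by simpa [h₀, hD.ne'] using hγ
  exact ⟨α, β, nonneg_of_mul_nonneg_left (hα ▸ hx.2.1) hD,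
    nonneg_of_mul_nonneg_left (hβ ▸ hx.2.2) hD, by linarith, by simp⟩

lemma mem_segment_of_mem_closedTriangle (hD : 0 < doubleArea p q w)
    (hx : x ∈ closedTriangle p q w) (hx' : x ∉ openTriangle p q w) :
    x ∈ segment ℝ p q ∨ x ∈ segment ℝ q w ∨ x ∈ segment ℝ w p := by
  have hD' : 0 < doubleArea q w p := by rwa [doubleArea_rotate]
  have hD'' : 0 < doubleArea w p q := by rwa [doubleArea_rotate]
  have hx₂ := closedTriangle_rotate hx
  have hx₃ := closedTriangle_rotate hx₂
  obtain h₁ | h₁ := hx.1.eq_or_lt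
  · exact .inl (mem_segment_of_doubleArea_eq_zero hD hx h₁.symm)
  obtain h₂ | h₂ := hx.2.1.eq_or_lt
  · exact .inr (.inl (mem_segment_of_doubleArea_eq_zero hD' hx₂ h₂.symm))
  obtain h₃ | h₃ := hx.2.2.eq_or_lt
  · exact .inr (.inr (mem_segment_of_doubleArea_eq_zero hD'' hx₃ h₃.symm))
  · exact absurd ⟨h₁, h₂, h₃⟩ hx'

end Triangle

section Power

variable {P : Set Disk} {d e f g : Disk} {x : Plane} {α β γ : ℝ}

/-- Leibniz's relation for a weighted centroid. -/
lemma sum_mul_dist_sq (h : α + β + γ = 1) (p q w v : Plane) :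
    α * dist p v ^ 2 + β * dist q v ^ 2 + γ * dist w v ^ 2 =
      dist (α • p + β • q + γ • w) v ^ 2 + α * β * dist p q ^ 2 + β * γ * dist q w ^ 2
        + γ * α * dist w p ^ 2 := by
  obtain rfl : α = 1 - β - γ := by linarith
  simp only [dist_sq_eq, PiLp.add_apply, PiLp.smul_apply, smul_eq_mul]
  ring

/-- The power of a point with respect to the boundary circle of a disk. -/
def Disk.power (d : Disk) (x : Plane) : ℝ := dist d.center x ^ 2 - d.radius ^ 2

lemma sum_mul_power (hde : d.Tangent e) (hef : e.Tangent f) (hfd : f.Tangent d)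
    (h : α + β + γ = 1) (hx : x = α • d.center + β • e.center + γ • f.center) :
    α * d.power x + β * e.power x + γ * f.power x =
      (α * d.radius + β * e.radius + γ * f.radius) ^ 2
        - 2 * ((α * d.radius) ^ 2 + (β * e.radius) ^ 2 + (γ * f.radius) ^ 2) := by
  have hL := sum_mul_dist_sq h d.center e.center f.center x
  rw [← hx, dist_self, hde, hef, hfd] at hL
  unfold Disk.power
  obtain rfl : α = 1 - β - γ := by linarith
  linear_combination hL

lemma Disk.Tangent.segment_subset (h : d.Tangent e) :
    segment ℝ d.center e.center ⊆ d.set ∪ e.set := by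
  intro x hx
  by_contra! hne
  rw [Set.mem_union, not_or, Disk.mem_set, Disk.mem_set, not_le, not_le] at hne
  have := dist_add_dist_of_mem_segment hx
  rw [h, dist_comm] at this
  linarith

lemma Disk.Tangent.disjoint_segment (h : d.Tangent e)
    (hd : d.radius + g.radius ≤ dist d.center g.center)
    (he : e.radius + g.radius ≤ dist e.center g.center) :
    Disjoint (segment ℝ d.center e.center) g.set := by
  rw [disjoint_left]
  rintro _ ⟨α, β, hα, hβ, hsum, rfl⟩ hg
  have hL := sum_mul_dist_sq (γ := 0) (by rwa [add_zero]) d.center e.center d.center g.center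
  rw [h, zero_smul, add_zero] at hL
  have hd' := pow_le_pow_left₀ (add_pos d.radius_pos g.radius_pos).le hd 2
  have he' := pow_le_pow_left₀ (add_pos e.radius_pos g.radius_pos).le he 2
  have hg' := pow_le_pow_left₀ dist_nonneg (Disk.mem_set.1 hg) 2
  have hpos : 0 < α * d.radius + β * e.radius := by
    obtain hα' | rfl := hα.lt_or_eq
    · linarith [mul_pos hα' d.radius_pos, mul_nonneg hβ e.radius_pos.le]
    · obtain rfl : β = 1 := by linarith
      linarith [e.radius_pos]
  obtain rfl : α = 1 - β := by linarith
  nlinarith [mul_le_mul_of_nonneg_left hd' hα, mul_le_mul_of_nonneg_left he' hβ,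
    mul_pos g.radius_pos hpos, sq_nonneg ((1 - β) * d.radius - β * e.radius)]

end Power

section Tile

variable {P : Set Disk} {d e f g : Disk} {x : Plane} {r R : ℝ}

/-- Three pairwise tangent disks of `P`, in counterclockwise order, whose triangle of centers
contains no further center of a disk of `P`. -/
structure IsTile (P : Set Disk) (d e f : Disk) : Prop where
  mem₁ : d ∈ P
  mem₂ : e ∈ P
  mem₃ : f ∈ P
  tangent₁₂ : d.Tangent e
  tangent₂₃ : e.Tangent f
  tangent₃₁ : f.Tangent d
  pos : 0 < doubleArea d.center e.center f.center
  eq_of_center_mem : ∀ g ∈ P, g.center ∈ closedTriangle d.center e.center f.center →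
    g = d ∨ g = e ∨ g = f

lemma IsTile.rotate (h : IsTile P d e f) : IsTile P e f d where
  mem₁ := h.mem₂
  mem₂ := h.mem₃
  mem₃ := h.mem₁
  tangent₁₂ := h.tangent₂₃
  tangent₂₃ := h.tangent₃₁
  tangent₃₁ := h.tangent₁₂
  pos := by rw [doubleArea_rotate]; exact h.pos
  eq_of_center_mem g hg hgT := by
    have := h.eq_of_center_mem g hg (closedTriangle_rotate (closedTriangle_rotate hgT))
    tauto

lemma IsTile.mem_segment_or (h : IsTile P d e f)
    (hx : x ∈ closedTriangle d.center e.center f.center)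
    (hx' : x ∉ openTriangle d.center e.center f.center) :
    ∃ k ∈ ({d, e, f} : Set Disk), ∃ l ∈ ({d, e, f} : Set Disk), k.Tangent l ∧
      x ∈ segment ℝ k.center l.center := by
  obtain hx | hx | hx := mem_segment_of_mem_closedTriangle h.pos hx hx'
  · exact ⟨d, by simp, e, by simp, h.tangent₁₂, hx⟩
  · exact ⟨e, by simp, f, by simp, h.tangent₂₃, hx⟩
  · exact ⟨f, by simp, d, by simp, h.tangent₃₁, hx⟩

lemma IsTile.subset (h : IsTile P d e f) : {d, e, f} ⊆ P := by
  simp [insert_subset_iff, h.mem₁, h.mem₂, h.mem₃]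

lemma IsTile.mem_openTriangle (h : IsTile P d e f)
    (hx : x ∈ closedTriangle d.center e.center f.center) (hxP : x ∉ packingUnion P) :
    x ∈ openTriangle d.center e.center f.center := by
  by_contra hx'
  obtain ⟨k, hk, l, hl, hkl, hxs⟩ := h.mem_segment_or hx hx'
  obtain hxk | hxl := hkl.segment_subset hxs
  · exact hxP (mem_packingUnion.2 ⟨k, h.subset hk, hxk⟩)
  · exact hxP (mem_packingUnion.2 ⟨l, h.subset hl, hxl⟩)

lemma IsTile.hole_subset (h : IsTile P d e f)
    (hx : x ∈ closedTriangle d.center e.center f.center) (hxP : x ∉ packingUnion P) :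
    hole P x ⊆ openTriangle d.center e.center f.center := by
  refine isPreconnected_connectedComponentIn.subset_of_closure_inter_subset
    (isOpen_openTriangle _ _ _) ⟨x, mem_connectedComponentIn hxP, h.mem_openTriangle hx hxP⟩ ?_
  rintro y ⟨hy, hyP⟩
  exact h.mem_openTriangle (closure_openTriangle_subset hy) (connectedComponentIn_subset _ _ hyP)

/-- A further disk that touches the hole has its center outside the triangle, so it crosses a side
of the triangle, but the sides are covered by the disks `d`, `e` and `f`. -/
lemma IsTile.touching_subset (h : IsTile P d e f) (hP : IsPacking P)
    (hx : x ∈ closedTriangle d.center e.center f.center) (hxP : x ∉ packingUnion P) :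
    touching P x ⊆ {d, e, f} := by
  rintro g ⟨hg, p, hp, hpg⟩
  by_contra hne
  have hpT := closure_openTriangle_subset (closure_mono (h.hole_subset hx hxP) hp)
  obtain ⟨q, hq, hqT, hqO⟩ : ∃ q ∈ segment ℝ p g.center,
      q ∈ closedTriangle d.center e.center f.center ∧
      q ∉ openTriangle d.center e.center f.center := by
    by_contra! hall
    have hsub := (convex_segment p g.center).isPreconnected.subset_of_closure_inter_subset
      (isOpen_openTriangle d.center e.center f.center)
      ⟨p, left_mem_segment _ _ _, hall p (left_mem_segment _ _ _) hpT⟩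
      fun y hy ↦ hall y hy.2 (closure_openTriangle_subset hy.1)
    exact hne (h.eq_of_center_mem g hg
      (openTriangle_subset_closedTriangle (hsub (right_mem_segment _ _ _))))
  have hqg : q ∈ g.set := (convex_closedBall g.center g.radius).segment_subset hpg
    (mem_closedBall_self g.radius_pos.le) hq
  obtain ⟨k, hk, l, hl, hkl, hqs⟩ := h.mem_segment_or hqT hqO
  have hsep {k : Disk} (hk : k ∈ ({d, e, f} : Set Disk)) :=
    isPacking_iff.1 hP k (h.subset hk) g hg fun hkg ↦ hne (hkg ▸ hk)
  exact disjoint_left.1 (hkl.disjoint_segment (hsep hk) (hsep hl)) hqs hqg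

lemma disjoint_ray_of_doubleArea_nonneg {p q : Plane} (hx : 0 ≤ doubleArea p q x)
    (hxd : x ∉ d.set) (hd : d.center ∈ ({p, q} : Set Plane)) :
    Disjoint ((fun t : ℝ ↦ x + t • !₂[-(q - p) 1, (q - p) 0]) '' Ici 0) d.set := by
  rw [disjoint_left]
  rintro _ ⟨t, ht, rfl⟩ hmem
  refine hxd (Disk.mem_set.2 ((pow_le_pow_left₀ dist_nonneg (Disk.mem_set.1 hmem) 2).trans' ?_
    |> fun h ↦ (pow_le_pow_iff_left₀ dist_nonneg d.radius_pos.le two_ne_zero).1 h))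
  simp only [doubleArea, cross, PiLp.sub_apply] at hx
  have hmul := mul_nonneg (mem_Ici.1 ht) hx
  rw [dist_sq_eq, dist_sq_eq]
  obtain hd | hd := hd <;> rw [hd] <;> simp <;>
    nlinarith [sq_nonneg (t * (q 0 - p 0)), sq_nonneg (t * (q 1 - p 1))]

/-- Otherwise the hole would contain a ray perpendicular to the side `d e` of the triangle. -/
lemma IsTile.mem_touching (h : IsTile P d e f) (hP : IsPacking P) (hr : 0 < r)
    (hR : RadiiIn P (Ici r)) (hx : x ∈ closedTriangle d.center e.center f.center)
    (hxP : x ∉ packingUnion P) : f ∈ touching P x := by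
  by_contra hf
  set v := e.center - d.center with hv
  have hray : (fun t : ℝ ↦ x + t • !₂[-v 1, v 0]) '' Ici 0 ⊆ hole P x := by
    refine subset_hole_of_isPreconnected ((convex_Ici 0).isPreconnected.image _ (by fun_prop))
      (hP.isClosed_packingUnion hr hR Subset.rfl)
      ⟨x, ⟨0, self_mem_Ici, by simp⟩, mem_connectedComponentIn hxP⟩ fun g hg ↦ ?_
    refine disjoint_ray_of_doubleArea_nonneg hx.1
      (fun hxg ↦ hxP (mem_packingUnion.2 ⟨g, hg.1, hxg⟩)) ?_
    obtain rfl | rfl | rfl := h.touching_subset hP hx hxP hg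
    · exact .inl rfl
    · exact .inr rfl
    · exact absurd hg hf
  have hv₀ : !₂[-v 1, v 0] ≠ (0 : Plane) := by
    intro h₀
    have hv0 : v = 0 := by
      ext i
      fin_cases i
      · simpa using congrArg (· 1) h₀
      · simpa using congrArg (· 0) h₀
    have hde := h.tangent₁₂
    rw [Disk.Tangent, ← sub_eq_zero.1 hv0, dist_self] at hde
    linarith [d.radius_pos, e.radius_pos]
  exact not_isBounded_ray x hv₀ 0 ((isBounded_closedTriangle h.pos).subset
    ((image_mono Ioi_subset_Ici_self).trans (hray.trans ((h.hole_subset hx hxP).trans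
      openTriangle_subset_closedTriangle))))

lemma IsTile.touching_eq (h : IsTile P d e f) (hP : IsPacking P) (hr : 0 < r)
    (hR : RadiiIn P (Ici r)) (hx : x ∈ closedTriangle d.center e.center f.center)
    (hxP : x ∉ packingUnion P) : touching P x = {d, e, f} := by
  refine (h.touching_subset hP hx hxP).antisymm ?_
  have hx' := closedTriangle_rotate hx
  rintro g (rfl | rfl | rfl)
  · exact h.rotate.mem_touching hP hr hR hx' hxP
  · exact h.rotate.rotate.mem_touching hP hr hR (closedTriangle_rotate hx') hxP
  · exact h.mem_touching hP hr hR hx hxP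

lemma IsPacking.exists_power_le (hP : IsPacking P) (hr : 0 < r) (hR : RadiiIn P (Icc r R))
    (hne : P.Nonempty) (x : Plane) : ∃ d ∈ P, ∀ e ∈ P, d.power x ≤ e.power x := by
  obtain ⟨d₀, hd₀⟩ := hne
  have hfin : {d ∈ P | dist d.center x ≤ dist d₀.center x + R}.Finite := by
    refine (hP.finite_meeting_closedBall hr (fun d hd ↦ (hR d hd).1) x
      (K := dist d₀.center x + R) ?_).subset fun d hd ↦ ⟨hd.1, d.center, ?_, hd.2⟩
    · linarith [d₀.radius_pos, (hR d₀ hd₀).2, dist_nonneg (x := d₀.center) (y := x)]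
    · exact mem_closedBall_self d.radius_pos.le
  have hd₀R : 0 ≤ R := d₀.radius_pos.le.trans (hR d₀ hd₀).2
  obtain ⟨d, hd, hmin⟩ := exists_min_image _ (fun d ↦ d.power x) hfin ⟨d₀, hd₀, by linarith⟩
  refine ⟨d, hd.1, fun e he ↦ ?_⟩
  by_cases hnear : dist e.center x ≤ dist d₀.center x + R
  · exact hmin e ⟨he, hnear⟩
  · refine (hmin d₀ ⟨hd₀, by linarith⟩).trans ?_
    unfold Disk.power
    nlinarith [(hR e he).2, e.radius_pos, d₀.radius_pos, dist_nonneg (x := d₀.center) (y := x)]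

/-- Within the sector of `d`, the points beyond the side `e f` have smaller power with respect to
`e` or `f` than with respect to `d`. -/
lemma IsTile.mem_closedTriangle (h : IsTile P d e f) (hmin : ∀ k ∈ P, d.power x ≤ k.power x)
    (hde : 0 ≤ doubleArea d.center e.center x) (hfd : 0 ≤ doubleArea f.center d.center x) :
    x ∈ closedTriangle d.center e.center f.center := by
  refine ⟨hde, ?_, hfd⟩
  obtain ⟨α, β, γ, hsum, hx, hα, hβ, hγ⟩ := exists_barycentric h.pos x
  have hβ₀ : 0 ≤ β := nonneg_of_mul_nonneg_left (hβ ▸ hfd) h.pos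
  have hγ₀ : 0 ≤ γ := nonneg_of_mul_nonneg_left (hγ ▸ hde) h.pos
  suffices 0 ≤ α from hα ▸ mul_nonneg this h.pos.le
  by_contra! hα₀
  have hL := sum_mul_dist_sq hsum d.center e.center f.center d.center
  rw [← hx, dist_self, dist_comm e.center, dist_comm x, h.tangent₁₂, h.tangent₂₃, h.tangent₃₁] at hL
  have hpow := sum_mul_power h.tangent₁₂ h.tangent₂₃ h.tangent₃₁ hsum hx
  have he := mul_le_mul_of_nonneg_left (hmin e h.mem₂) hβ₀
  have hf := mul_le_mul_of_nonneg_left (hmin f h.mem₃) hγ₀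
  have hd := d.radius_pos
  have hm : 0 ≤ β * e.radius + γ * f.radius :=
    add_nonneg (mul_nonneg hβ₀ e.radius_pos.le) (mul_nonneg hγ₀ f.radius_pos.le)
  obtain rfl : α = 1 - β - γ := by linarith
  have hle : (β + γ) * (β + γ - 1) * d.radius ^ 2
      + d.radius * (2 * (β + γ) - 1) * (β * e.radius + γ * f.radius)
      + (β * e.radius - γ * f.radius) ^ 2 ≤ 0 := by
    unfold Disk.power at *
    nlinarith
  have h₁ : 0 < (β + γ) * (β + γ - 1) * d.radius ^ 2 := by
    have : 0 < β + γ - 1 := by linarith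
    have : 0 < β + γ := by linarith
    positivity
  have h₂ : 0 ≤ d.radius * (2 * (β + γ) - 1) * (β * e.radius + γ * f.radius) :=
    mul_nonneg (mul_nonneg hd.le (by linarith)) hm
  linarith [sq_nonneg (β * e.radius - γ * f.radius)]

theorem isCompactPacking_of_isTile (hP : IsPacking P) (hr : 0 < r) (hR : RadiiIn P (Icc r R))
    (hne : P.Nonempty) (hcone : ∀ d ∈ P, ∀ x : Plane, ∃ e f, IsTile P d e f ∧
      0 ≤ doubleArea d.center e.center x ∧ 0 ≤ doubleArea f.center d.center x) :
    IsCompactPacking P := by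
  refine ⟨hP, fun x hxP ↦ ?_⟩
  obtain ⟨d, hd, hmin⟩ := hP.exists_power_le hr hR hne x
  obtain ⟨e, f, h, hde, hfd⟩ := hcone d hd x
  have hx := h.mem_closedTriangle hmin hde hfd
  exact ⟨(isBounded_closedTriangle h.pos).subset
    ((h.hole_subset hx hxP).trans openTriangle_subset_closedTriangle), d, e, f, h.mem₁, h.mem₂,
    h.mem₃, h.tangent₁₂.ne, h.tangent₃₁.ne.symm, h.tangent₂₃.ne, h.tangent₁₂, h.tangent₃₁.symm,
    h.tangent₂₃, h.touching_eq hP hr (fun d hd ↦ (hR d hd).1) hx hxP⟩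

end Tile

section EmptyTriangle

variable {P : Set Disk} {d e f g : Disk} {r : ℝ}

lemma IsPacking.exists_weights_of_center_mem (hP : IsPacking P) (hd : d ∈ P) (he : e ∈ P)
    (hf : f ∈ P) (hde : d.Tangent e) (hef : e.Tangent f) (hfd : f.Tangent d)
    (hD : 0 < doubleArea d.center e.center f.center) (hg : g ∈ P)
    (hgT : g.center ∈ closedTriangle d.center e.center f.center) (hgd : g ≠ d) (hge : g ≠ e)
    (hgf : g ≠ f) : ∃ α β γ : ℝ, 0 ≤ α ∧ 0 ≤ β ∧ 0 ≤ γ ∧ α + β + γ = 1 ∧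
      2 * (α * d.radius + β * e.radius + γ * f.radius) * g.radius + g.radius ^ 2 ≤
        (α * d.radius + β * e.radius + γ * f.radius) ^ 2
          - 2 * ((α * d.radius) ^ 2 + (β * e.radius) ^ 2 + (γ * f.radius) ^ 2) := by
  obtain ⟨α, β, γ, hα, hβ, hγ, hsum, hx⟩ := exists_barycentric_of_mem_closedTriangle hD hgT
  refine ⟨α, β, γ, hα, hβ, hγ, hsum, ?_⟩
  have hpow {k : Disk} (hk : k ∈ P) (hgk : g ≠ k) :
      2 * k.radius * g.radius + g.radius ^ 2 ≤ k.power g.center := by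
    have := pow_le_pow_left₀ (add_pos k.radius_pos g.radius_pos).le
      (isPacking_iff.1 hP k hk g hg hgk.symm) 2
    unfold Disk.power
    linarith
  rw [← sum_mul_power hde hef hfd hsum hx]
  calc 2 * (α * d.radius + β * e.radius + γ * f.radius) * g.radius + g.radius ^ 2
      = α * (2 * d.radius * g.radius + g.radius ^ 2)
        + β * (2 * e.radius * g.radius + g.radius ^ 2)
        + γ * (2 * f.radius * g.radius + g.radius ^ 2) := by
        linear_combination (-g.radius ^ 2) * hsum
    _ ≤ _ := by gcongr <;> exact hpow ‹_› ‹_›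

lemma lt_of_add_sq_le_sub {u v w ρ : ℝ} (hu : 0 ≤ u) (hv : 0 ≤ v) (hw : 0 ≤ w) (hρ : 0 < ρ)
    (h : 2 * (u + v + w) * ρ + ρ ^ 2 ≤ (u + v + w) ^ 2 - 2 * (u ^ 2 + v ^ 2 + w ^ 2)) : ρ < w := by
  by_contra! hle
  have hmul : w * (u + v) ≤ ρ * (u + v) := by gcongr
  nlinarith [sq_nonneg (u - v), mul_nonneg hw hρ.le, pow_pos hρ 2, sq_nonneg w]

/-- A disk of radius `ρ` squeezed into the gap of three disks of radius `1` satisfies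
`1 + ρ ≤ 2 / √3`. -/
lemma three_mul_one_add_sq_le {u v w ρ : ℝ} (hρ : 0 < ρ) (hr : 0 < r) (hrρ : r ≤ ρ)
    (hm₀ : 0 ≤ u + v + w) (hm₁ : u + v + w ≤ 1)
    (h : 2 * (u + v + w) * ρ + ρ ^ 2 ≤ (u + v + w) ^ 2 - 2 * (u ^ 2 + v ^ 2 + w ^ 2)) :
    3 * (1 + r) ^ 2 ≤ 4 := by
  have hsq : 3 * (ρ + (u + v + w)) ^ 2 ≤ 4 * (u + v + w) ^ 2 := by
    nlinarith [sq_nonneg (u - v), sq_nonneg (v - w), sq_nonneg (w - u)]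
  set m := u + v + w
  have hm_pos : 0 < m := hm₀.lt_of_ne fun h₀ ↦ by
    rw [← h₀] at hsq
    nlinarith [pow_pos hρ 2]
  refine le_of_mul_le_mul_right ?_ (pow_pos hm_pos 2)
  calc
    3 * (1 + r) ^ 2 * m ^ 2 = 3 * (m * r + m) ^ 2 := by ring
    _ ≤ 3 * (ρ + m) ^ 2 := by
      gcongr
      exact (mul_le_of_le_one_left hr.le hm₁).trans hrρ
    _ ≤ 4 * m ^ 2 := hsq

lemma IsPacking.isTile_of_radius (hP : IsPacking P) (hr : 0 < r) (hR : RadiiIn P (Icc r 1))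
    (hd : d ∈ P) (he : e ∈ P) (hf : f ∈ P) (hde : d.Tangent e) (hef : e.Tangent f)
    (hfd : f.Tangent d) (hD : 0 < doubleArea d.center e.center f.center)
    (hsmall : d.radius = r ∨ e.radius = r ∨ f.radius = r ∨ 4 < 3 * (1 + r) ^ 2) :
    IsTile P d e f := by
  refine ⟨hd, he, hf, hde, hef, hfd, hD, fun g hg hgT ↦ ?_⟩
  by_contra! hne
  obtain ⟨α, β, γ, hα, hβ, hγ, hsum, h⟩ := hP.exists_weights_of_center_mem hd he hf hde hef hfd hD
    hg hgT hne.1 hne.2.1 hne.2.2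
  have hrg := (hR g hg).1
  have hu := mul_nonneg hα d.radius_pos.le
  have hv := mul_nonneg hβ e.radius_pos.le
  have hw := mul_nonneg hγ f.radius_pos.le
  obtain hmin | hmin | hmin | hbig := hsmall
  · have := lt_of_add_sq_le_sub hv hw hu g.radius_pos (by linarith)
    nlinarith
  · have := lt_of_add_sq_le_sub hw hu hv g.radius_pos (by linarith)
    nlinarith
  · have := lt_of_add_sq_le_sub hu hv hw g.radius_pos h
    nlinarith
  · refine absurd (three_mul_one_add_sq_le g.radius_pos hr hrg (by positivity) ?_ h) hbig.not_ge
    have := mul_le_mul_of_nonneg_left (hR d hd).2 hα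
    have := mul_le_mul_of_nonneg_left (hR e he).2 hβ
    have := mul_le_mul_of_nonneg_left (hR f hf).2 hγ
    linarith

end EmptyTriangle

/-! ### Periodic packings -/

section ConeCover

variable {ι : Type*} {S : Finset ι} {v : ι → Plane} {σ : ι → ι} {x : Plane}

lemma inner_mul_cross_sub (v w x : Plane) :
    inner ℝ w x * cross v x - inner ℝ v x * cross w x = ‖x‖ ^ 2 * cross v w := by
  simp only [cross, EuclideanSpace.real_norm_sq_eq, PiLp.inner_apply, Fin.sum_univ_two,
    RCLike.inner_apply, conj_trivial]
  ring

/-- Otherwise `⟪v i, x⟫ / cross (v i) x` would increase strictly along every orbit of `σ`. -/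
lemma exists_cross_mul_cross_nonpos (hS : S.Nonempty) (hσ : MapsTo σ S S)
    (hv : ∀ i ∈ S, 0 < cross (v i) (v (σ i))) (hx : x ≠ 0) :
    ∃ i ∈ S, cross (v i) x * cross (v (σ i)) x ≤ 0 := by
  by_contra! hpos
  obtain ⟨i, hi, hmax⟩ := S.exists_max_image (fun i ↦ inner ℝ (v i) x / cross (v i) x) hS
  have hne := mul_ne_zero_iff.1 (hpos i hi).ne'
  have hinc : 0 < inner ℝ (v (σ i)) x / cross (v (σ i)) x - inner ℝ (v i) x / cross (v i) x := by
    rw [div_sub_div _ _ hne.2 hne.1, mul_comm (cross (v (σ i)) x) (inner ℝ (v i) x),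
      inner_mul_cross_sub, mul_comm (cross (v (σ i)) x)]
    exact div_pos (mul_pos (by positivity) (hv i hi)) (hpos i hi)
  linarith [hmax (σ i) (hσ hi)]

lemma exists_mem_cone (hS : S.Nonempty) (hσ : MapsTo σ S S)
    (hv : ∀ i ∈ S, 0 < cross (v i) (v (σ i))) (x : Plane) :
    ∃ i ∈ S, 0 ≤ cross (v i) x ∧ 0 ≤ cross x (v (σ i)) := by
  classical
  have hanti (i) : cross x (v i) = -cross (v i) x := by
    unfold cross
    ring
  simp only [hanti]
  obtain rfl | hx := eq_or_ne x 0
  · exact hS.imp fun i hi ↦ ⟨hi, by simp [cross], by simp [cross]⟩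
  by_contra! hcon
  replace hcon : ∀ i ∈ S, 0 ≤ cross (v i) x → 0 < cross (v (σ i)) x := fun i hi h ↦ by
    linarith [hcon i hi h]
  by_cases hex : ∃ i ∈ S, 0 ≤ cross (v i) x
  · obtain ⟨i, hi, hix⟩ := hex
    obtain ⟨j, hj, hjx⟩ := exists_cross_mul_cross_nonpos (S := {i ∈ S | 0 < cross (v i) x})
      ⟨σ i, Finset.mem_filter.2 ⟨hσ hi, hcon i hi hix⟩⟩
      (fun j hj ↦ by
        rw [Finset.mem_coe, Finset.mem_filter] at hj ⊢
        exact ⟨hσ hj.1, hcon j hj.1 hj.2.le⟩)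
      (fun j hj ↦ hv j (Finset.mem_filter.1 hj).1) hx
    obtain ⟨hj, hjpos⟩ := Finset.mem_filter.1 hj
    exact hjx.not_gt (mul_pos hjpos (hcon j hj hjpos.le))
  · push Not at hex
    obtain ⟨j, hj, hjx⟩ := exists_cross_mul_cross_nonpos hS hσ hv hx
    exact hjx.not_gt (mul_pos_of_neg_of_neg (hex j hj) (hex _ (hσ hj)))

end ConeCover

section Layout

/-- A doubly periodic arrangement of disks: the disks with centers `(x i, y i)` and radii
`radius i`, and their translates by the lattice spanned by `(u, 0)` and `(v, w)`. Real layouts are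
exact, integer layouts record lengths in units of `10⁻⁴`. -/
structure Layout (k : ℕ) (R : Type*) where
  x : Fin k → R
  y : Fin k → R
  radius : Fin k → R
  u : R
  v : R
  w : R

/-- The site `(i, m, n)` is the `i`-th disk of a layout translated by `m (u, 0) + n (v, w)`. -/
abbrev Site (k : ℕ) : Type := Fin k × ℤ × ℤ

namespace Layout

variable {k : ℕ} {R : Type*} [Ring R] {i : Fin k} {p q : Site k}

/-- The abscissa of the vector from the center of the disk `i` to that of the disk `p`. -/
def dx (L : Layout k R) (i : Fin k) (p : Site k) : R :=
  L.x p.1 - L.x i + p.2.1 * L.u + p.2.2 * L.v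

/-- The ordinate of the vector from the center of the disk `i` to that of the disk `p`. -/
def dy (L : Layout k R) (i : Fin k) (p : Site k) : R :=
  L.y p.1 - L.y i + p.2.2 * L.w

variable {L : Layout k ℝ} {r : ℝ}

/-- The vector from the center of the disk `i` to that of the disk `p`. -/
def step (L : Layout k ℝ) (i : Fin k) (p : Site k) : Plane := !₂[L.dx i p, L.dy i p]

/-- The disk of a layout at a site. -/
def disk (hL : ∀ i, 0 < L.radius i) (p : Site k) : Disk where
  center := !₂[L.x p.1 + p.2.1 * L.u + p.2.2 * L.v, L.y p.1 + p.2.2 * L.w]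
  radius := L.radius p.1
  radius_pos := hL p.1

lemma center_sub_center (hL : ∀ i, 0 < L.radius i) (p q : Site k) :
    (disk hL q).center - (disk hL p).center = L.step p.1 (q.1, q.2 - p.2) := by
  ext i
  fin_cases i <;> simp [disk, step, dx, dy] <;> ring

lemma dist_center_sq (hL : ∀ i, 0 < L.radius i) (p q : Site k) :
    dist (disk hL p).center (disk hL q).center ^ 2 =
      L.dx p.1 (q.1, q.2 - p.2) ^ 2 + L.dy p.1 (q.1, q.2 - p.2) ^ 2 := by
  rw [dist_comm, dist_eq_norm, center_sub_center, EuclideanSpace.real_norm_sq_eq]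
  simp [step]

lemma tangent_disk (hL : ∀ i, 0 < L.radius i)
    (h : L.dx p.1 (q.1, q.2 - p.2) ^ 2 + L.dy p.1 (q.1, q.2 - p.2) ^ 2 =
      (L.radius p.1 + L.radius q.1) ^ 2) : (disk hL p).Tangent (disk hL q) := by
  rwa [← dist_center_sq hL, sq_eq_sq₀ dist_nonneg (add_pos (hL _) (hL _)).le] at h

lemma isPacking_range_disk (hL : ∀ i, 0 < L.radius i)
    (hsep : ∀ i p, p ≠ (i, 0) → (L.radius i + L.radius p.1) ^ 2 ≤ L.dx i p ^ 2 + L.dy i p ^ 2) :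
    IsPacking (range (disk hL)) := by
  rw [isPacking_iff]
  rintro _ ⟨p, rfl⟩ _ ⟨q, rfl⟩ hpq
  refine (pow_le_pow_iff_left₀ (add_pos (hL _) (hL _)).le dist_nonneg two_ne_zero).1 ?_
  rw [dist_center_sq]
  refine hsep p.1 (q.1, q.2 - p.2) fun h ↦ hpq ?_
  rw [Prod.mk.injEq, sub_eq_zero] at h
  rw [Prod.ext h.1.symm h.2.symm]

theorem isCompactPacking_range_disk [Nonempty (Fin k)] (hL : ∀ i, 0 < L.radius i) (hr : 0 < r)
    (hrad : ∀ i, L.radius i ∈ Icc r 1)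
    (hsep : ∀ i p, p ≠ (i, 0) → (L.radius i + L.radius p.1) ^ 2 ≤ L.dx i p ^ 2 + L.dy i p ^ 2)
    {N : Fin k → Finset (Site k)} (hne : ∀ i, (N i).Nonempty)
    (htan : ∀ i, ∀ p ∈ N i, L.dx i p ^ 2 + L.dy i p ^ 2 = (L.radius i + L.radius p.1) ^ 2)
    (hnext : ∀ i, ∀ p ∈ N i, ∃ q ∈ N i, (q.1, q.2 - p.2) ∈ N p.1 ∧
      0 < cross (L.step i p) (L.step i q) ∧
      (L.radius i = r ∨ L.radius p.1 = r ∨ L.radius q.1 = r ∨ 4 < 3 * (1 + r) ^ 2)) :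
    IsCompactPacking (range (disk hL)) := by
  have hP := isPacking_range_disk hL hsep
  have hR : RadiiIn (range (disk hL)) (Icc r 1) := by
    rintro _ ⟨p, rfl⟩
    exact hrad p.1
  refine isCompactPacking_of_isTile hP hr hR (range_nonempty _) ?_
  rintro _ ⟨⟨i, c⟩, rfl⟩ x
  choose! σ hσ htanσ hpos hsmall using hnext i
  obtain ⟨p, hp, hpx, hxp⟩ := exists_mem_cone (hne i) hσ hpos (x - (disk hL (i, c)).center)
  have hcenter (q : Site k) :
      (disk hL (q.1, c + q.2)).center - (disk hL (i, c)).center = L.step i q := by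
    rw [center_sub_center, add_sub_cancel_left]
  have htangent {q : Site k} (hq : q ∈ N i) : (disk hL (i, c)).Tangent (disk hL (q.1, c + q.2)) :=
    tangent_disk hL (by simpa only [add_sub_cancel_left] using htan i q hq)
  refine ⟨disk hL (p.1, c + p.2), disk hL ((σ p).1, c + (σ p).2),
    hP.isTile_of_radius hr hR (mem_range_self _) (mem_range_self _) (mem_range_self _)
      (htangent hp) (tangent_disk hL ?_) (htangent (hσ p hp)).symm ?_ (hsmall p hp), ?_, ?_⟩
  · simpa only [add_sub_add_left_eq_sub] using htan p.1 _ (htanσ p hp)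
  · rw [doubleArea, hcenter, hcenter]
    exact hpos p hp
  · rwa [doubleArea, hcenter]
  · rwa [← doubleArea_rotate, ← doubleArea_rotate, doubleArea_rotate, doubleArea_rotate,
      ← doubleArea_rotate, doubleArea, hcenter]

end Layout

end Layout

section Certificate

/-- The sites of the disks in contact with the disk `i`, if `E` lists the contacts `(i, p)` between
the disk `i` and the disk `p` up to symmetry and translation. -/
def neighbors {k : ℕ} (E : List (Fin k × Site k)) (i : Fin k) : List (Site k) :=
  E.filterMap (fun e ↦ if e.1 = i then some e.2 else none) ++
    E.filterMap (fun e ↦ if e.2.1 = i then some (e.1, -e.2.2) else none)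

/-- An integer layout with a list of contacts and finitely many inequalities which ensure that
every real layout with this approximation and these contacts is a compact packing. In the window
`|m|, |n| ≤ 2` of translations the coordinate differences `dx` and `dy` are accurate up to `6`
units; by `far_u` and `far_w` disks outside of the window have centers at distance at least `2`. -/
structure Certificate (k : ℕ) extends Layout k ℤ where
  contacts : List (Fin k × Site k)
  far_w : ∀ i j, 2 * 10 ^ 4 + 2 + |y j - y i| ≤ 3 * (w - 1) := by decide +kernel
  far_u : ∀ i j, ∀ n ∈ Finset.Icc (-2) 2, 2 * 10 ^ 4 + 4 + |x j - x i + n * v| ≤ 3 * (u - 1) := by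
    decide +kernel
  separated : ∀ i j, ∀ m ∈ Finset.Icc (-2) 2, ∀ n ∈ Finset.Icc (-2) 2,
    (j, m, n) = (i, 0) ∨ (j, m, n) ∈ neighbors contacts i ∨
      (radius i + radius j + 2) ^ 2 +
          12 * (|toLayout.dx i (j, m, n)| + |toLayout.dy i (j, m, n)|) ≤
        toLayout.dx i (j, m, n) ^ 2 + toLayout.dy i (j, m, n) ^ 2 := by decide +kernel
  window : ∀ i, ∀ p ∈ neighbors contacts i,
    p.2.1 ∈ Finset.Icc (-2) 2 ∧ p.2.2 ∈ Finset.Icc (-2) 2 := by decide +kernel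
  neighbors_ne_nil : ∀ i, neighbors contacts i ≠ [] := by decide +kernel
  next : ∀ i, ∀ p ∈ neighbors contacts i, ∃ q ∈ neighbors contacts i,
    (q.1, q.2 - p.2) ∈ neighbors contacts p.1 ∧
    6 * (|toLayout.dx i p| + |toLayout.dy i p| + |toLayout.dx i q| + |toLayout.dy i q|) +
        2 * 6 ^ 2 <
      toLayout.dx i p * toLayout.dy i q - toLayout.dy i p * toLayout.dx i q ∧
    (radius i < 9999 ∨ radius p.1 < 9999 ∨ radius q.1 < 9999 ∨
      ∀ l, 4 * (10 ^ 4) ^ 2 < 3 * (10 ^ 4 + radius l - 1) ^ 2) := by decide +kernel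

/-- The real layout `L` agrees with the integer layout of `C` up to one unit of `10⁻⁴`, and its
disks are tangent along the contacts of `C`. -/
structure Realizes {k : ℕ} (L : Layout k ℝ) (C : Certificate k) : Prop where
  x : ∀ i, |10 ^ 4 * L.x i - C.x i| ≤ 1
  y : ∀ i, |10 ^ 4 * L.y i - C.y i| ≤ 1
  radius : ∀ i, |10 ^ 4 * L.radius i - C.radius i| ≤ 1
  u : |10 ^ 4 * L.u - C.u| ≤ 1
  v : |10 ^ 4 * L.v - C.v| ≤ 1
  w : |10 ^ 4 * L.w - C.w| ≤ 1
  contact : ∀ e ∈ C.contacts,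
    L.dx e.1 e.2 ^ 2 + L.dy e.1 e.2 ^ 2 = (L.radius e.1 + L.radius e.2.1) ^ 2

variable {k : ℕ} {L : Layout k ℝ} {C : Certificate k} {E : List (Fin k × Site k)} {i : Fin k}
  {p : Site k}

lemma mem_neighbors : p ∈ neighbors E i ↔ (i, p) ∈ E ∨ (p.1, i, -p.2) ∈ E := by
  simp only [neighbors, List.mem_append, List.mem_filterMap, Option.ite_none_right_eq_some,
    Option.some.injEq]
  refine or_congr ⟨?_, fun h ↦ ⟨_, h, rfl, rfl⟩⟩ ⟨?_, fun h ↦ ⟨_, h, rfl, by simp⟩⟩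
  · rintro ⟨e, he, rfl, rfl⟩
    exact he
  · rintro ⟨e, he, rfl, rfl⟩
    simpa using he

lemma mul_error_le {t : ℝ} {a n : ℤ} (ht : |10 ^ 4 * t - a| ≤ 1) (hn : n ∈ Finset.Icc (-2) 2) :
    |n * (10 ^ 4 * t - a)| ≤ 2 := by
  rw [Finset.mem_Icc, ← abs_le] at hn
  rw [abs_mul]
  have : |(n : ℝ)| ≤ 2 := mod_cast hn
  nlinarith [abs_nonneg (n : ℝ), abs_nonneg (10 ^ 4 * t - a)]

lemma sq_sub_le_sq {s a : ℝ} (h : |s - a| ≤ 6) : a ^ 2 - 12 * |a| ≤ s ^ 2 := by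
  have := (abs_mul (s - a) a).le.trans (mul_le_mul_of_nonneg_right h (abs_nonneg a))
  nlinarith [(abs_le.1 this).1, sq_nonneg (s - a)]

lemma mul_sub_mul_le {a b c d a' b' c' d' ε : ℝ} (ha : |a - a'| ≤ ε) (hb : |b - b'| ≤ ε)
    (hc : |c - c'| ≤ ε) (hd : |d - d'| ≤ ε) :
    a' * d' - b' * c' - (ε * (|a'| + |b'| + |c'| + |d'|) + 2 * ε ^ 2) ≤ a * d - b * c := by
  have hmul {s t δ : ℝ} (hs : |s| ≤ ε) (ht : |t| ≤ δ) : |s * t| ≤ ε * δ := by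
    rw [abs_mul]
    exact mul_le_mul hs ht (abs_nonneg t) ((abs_nonneg s).trans hs)
  linarith [(abs_le.1 (hmul ha le_rfl : |(a - a') * d'| ≤ _)).1,
    (abs_le.1 (hmul hd le_rfl : |(d - d') * a'| ≤ _)).1,
    (abs_le.1 (hmul hb le_rfl : |(b - b') * c'| ≤ _)).2,
    (abs_le.1 (hmul hc le_rfl : |(c - c') * b'| ≤ _)).2,
    (abs_le.1 (hmul ha hd)).1, (abs_le.1 (hmul hb hc)).2]

lemma two_le_abs_add_mul {s u : ℝ} {a b m c : ℤ} (hs : |10 ^ 4 * s - a| ≤ (c : ℝ))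
    (hu : |10 ^ 4 * u - b| ≤ 1) (hm : m ∉ Finset.Icc (-2) 2)
    (h : 2 * 10 ^ 4 + c + |a| ≤ 3 * (b - 1)) : 2 ≤ |s + m * u| := by
  have hm' : 3 ≤ |(m : ℝ)| := by
    rw [Finset.mem_Icc, ← abs_le, not_le] at hm
    exact mod_cast hm
  have h' : 2 * 10 ^ 4 + (c : ℝ) + |(a : ℝ)| ≤ 3 * (b - 1) := mod_cast h
  have hsa := (abs_sub_abs_le_abs_sub (10 ^ 4 * s) (a : ℝ)).trans hs
  rw [abs_mul, abs_of_pos (by positivity : (0 : ℝ) < 10 ^ 4)] at hsa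
  have hsmu := abs_sub (s + m * u) s
  rw [add_sub_cancel_left, abs_mul] at hsmu
  have hbu : (b : ℝ) - 1 ≤ 10 ^ 4 * |u| := by linarith [le_abs_self u, (abs_le.1 hu).1]
  linarith [mul_le_mul_of_nonneg_right hm' (abs_nonneg u)]

namespace Realizes

lemma dx_error_le (h : Realizes L C) (hm : p.2.1 ∈ Finset.Icc (-2) 2)
    (hn : p.2.2 ∈ Finset.Icc (-2) 2) : |10 ^ 4 * L.dx i p - C.dx i p| ≤ 6 := by
  have hi := abs_le.1 (h.x i)
  have hj := abs_le.1 (h.x p.1)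
  have hu := abs_le.1 (mul_error_le h.u hm)
  have hv := abs_le.1 (mul_error_le h.v hn)
  simp only [Layout.dx, Int.cast_id]
  push_cast
  rw [abs_le]
  constructor <;> linarith

lemma dy_error_le (h : Realizes L C) (hn : p.2.2 ∈ Finset.Icc (-2) 2) :
    |10 ^ 4 * L.dy i p - C.dy i p| ≤ 6 := by
  have hi := abs_le.1 (h.y i)
  have hj := abs_le.1 (h.y p.1)
  have hw := abs_le.1 (mul_error_le h.w hn)
  simp only [Layout.dy, Int.cast_id]
  push_cast
  rw [abs_le]
  constructor <;> linarith

lemma dist_eq_of_mem_neighbors (h : Realizes L C) (hp : p ∈ neighbors C.contacts i) :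
    L.dx i p ^ 2 + L.dy i p ^ 2 = (L.radius i + L.radius p.1) ^ 2 := by
  obtain hp | hp := mem_neighbors.1 hp
  · exact h.contact _ hp
  · have := h.contact _ hp
    simp only [Layout.dx, Layout.dy, Prod.fst_neg, Prod.snd_neg, Int.cast_neg] at this ⊢
    linear_combination this

lemma two_le_abs_dy (h : Realizes L C) (hn : p.2.2 ∉ Finset.Icc (-2) 2) : 2 ≤ |L.dy i p| := by
  refine two_le_abs_add_mul (a := C.y p.1 - C.y i) (c := 2) ?_ h.w hn (C.far_w i p.1)
  have hi := abs_le.1 (h.y i)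
  have hj := abs_le.1 (h.y p.1)
  push_cast
  rw [abs_le]
  constructor <;> linarith

lemma two_le_abs_dx (h : Realizes L C) (hn : p.2.2 ∈ Finset.Icc (-2) 2)
    (hm : p.2.1 ∉ Finset.Icc (-2) 2) : 2 ≤ |L.dx i p| := by
  rw [Layout.dx, add_right_comm]
  refine two_le_abs_add_mul (a := C.x p.1 - C.x i + p.2.2 * C.v) (c := 4) ?_ h.u hm
    (C.far_u i p.1 _ hn)
  have hi := abs_le.1 (h.x i)
  have hj := abs_le.1 (h.x p.1)
  have hv := abs_le.1 (mul_error_le h.v hn)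
  push_cast
  rw [abs_le]
  constructor <;> linarith

lemma dist_ge (h : Realizes L C) (hrad : ∀ i, L.radius i ∈ Icc 0 1) (hp : p ≠ (i, 0)) :
    (L.radius i + L.radius p.1) ^ 2 ≤ L.dx i p ^ 2 + L.dy i p ^ 2 := by
  have hsum : 0 ≤ L.radius i + L.radius p.1 := add_nonneg (hrad i).1 (hrad p.1).1
  have hle : (L.radius i + L.radius p.1) ^ 2 ≤ 2 ^ 2 :=
    pow_le_pow_left₀ hsum (by linarith [(hrad i).2, (hrad p.1).2]) 2
  by_cases hn : p.2.2 ∈ Finset.Icc (-2) 2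
  swap
  · have := pow_le_pow_left₀ zero_le_two (h.two_le_abs_dy hn (i := i)) 2
    rw [sq_abs] at this
    linarith [sq_nonneg (L.dx i p)]
  by_cases hm : p.2.1 ∈ Finset.Icc (-2) 2
  swap
  · have := pow_le_pow_left₀ zero_le_two (h.two_le_abs_dx hn hm (i := i)) 2
    rw [sq_abs] at this
    linarith [sq_nonneg (L.dy i p)]
  obtain heq | hnbr | hfar := C.separated i p.1 p.2.1 hm p.2.2 hn
  · exact absurd heq hp
  · exact (h.dist_eq_of_mem_neighbors hnbr).ge
  · have hfar' : ((C.radius i : ℝ) + C.radius p.1 + 2) ^ 2 +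
        12 * (|(C.dx i p : ℝ)| + |(C.dy i p : ℝ)|) ≤
          (C.dx i p : ℝ) ^ 2 + (C.dy i p : ℝ) ^ 2 := mod_cast hfar
    have hrad_le : (10 ^ 4 * (L.radius i + L.radius p.1)) ^ 2 ≤
        ((C.radius i : ℝ) + C.radius p.1 + 2) ^ 2 := by
      refine pow_le_pow_left₀ (by positivity) ?_ 2
      linarith [(abs_le.1 (h.radius i)).2, (abs_le.1 (h.radius p.1)).2]
    linarith [sq_sub_le_sq (h.dx_error_le hm hn (i := i)), sq_sub_le_sq (h.dy_error_le hn (i := i))]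

lemma cross_step_pos (h : Realizes L C) {q : Site k} (hp : p ∈ neighbors C.contacts i)
    (hq : q ∈ neighbors C.contacts i)
    (hpq : 6 * (|C.dx i p| + |C.dy i p| + |C.dx i q| + |C.dy i q|) + 2 * 6 ^ 2 <
      C.dx i p * C.dy i q - C.dy i p * C.dx i q) : 0 < cross (L.step i p) (L.step i q) := by
  obtain ⟨hpm, hpn⟩ := C.window i p hp
  obtain ⟨hqm, hqn⟩ := C.window i q hq
  have hle := mul_sub_mul_le (h.dx_error_le hpm hpn (i := i)) (h.dy_error_le hpn (i := i))
    (h.dx_error_le hqm hqn (i := i)) (h.dy_error_le hqn (i := i))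
  have hpq' : 6 * (|(C.dx i p : ℝ)| + |(C.dy i p : ℝ)| + |(C.dx i q : ℝ)| + |(C.dy i q : ℝ)|)
      + 2 * 6 ^ 2 < C.dx i p * C.dy i q - C.dy i p * C.dx i q := mod_cast hpq
  simp only [cross, Layout.step, PiLp.toLp_apply, Matrix.cons_val_zero, Matrix.cons_val_one]
  linarith

lemma radius_ne_one (h : Realizes L C) (hi : C.radius i < 9999) : L.radius i ≠ 1 := by
  intro h₁
  have hi' : (C.radius i : ℝ) < 9999 := mod_cast hi
  have := (abs_le.1 (h.radius i)).2
  rw [h₁] at this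
  linarith

lemma four_lt_three_mul_sq (h : Realizes L C) (hi : 0 < L.radius i)
    (hC : 4 * (10 ^ 4) ^ 2 < 3 * (10 ^ 4 + C.radius i - 1) ^ 2) :
    4 < 3 * (1 + L.radius i) ^ 2 := by
  have hC' : 4 * (10 ^ 4 : ℝ) ^ 2 < 3 * (10 ^ 4 + C.radius i - 1) ^ 2 := mod_cast hC
  obtain ⟨h₁, h₂⟩ := abs_le.1 (h.radius i)
  have := pow_le_pow_left₀ (by linarith : (0 : ℝ) ≤ 10 ^ 4 + C.radius i - 1)
    (by linarith : _ ≤ 10 ^ 4 * (1 + L.radius i)) 2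
  linarith

theorem mem_compactRatios (h : Realizes L C) {r : ℝ} (hr₀ : 0 < r) (hr₁ : r < 1)
    (hrad : range L.radius = {1, r}) : r ∈ compactRatios := by
  have hmem (i : Fin k) : L.radius i = 1 ∨ L.radius i = r := hrad.subset (mem_range_self i)
  have hIcc (i : Fin k) : L.radius i ∈ Icc r 1 := by
    obtain hi | hi := hmem i <;> rw [hi]
    exacts [⟨hr₁.le, le_rfl⟩, ⟨le_rfl, hr₁.le⟩]
  have hpos (i : Fin k) : 0 < L.radius i := hr₀.trans_le (hIcc i).1
  obtain ⟨i₁, hi₁⟩ : 1 ∈ range L.radius := by simp [hrad]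
  obtain ⟨l, hl⟩ : r ∈ range L.radius := by simp [hrad]
  have hsmall {i : Fin k} (hi : C.radius i < 9999) : L.radius i = r :=
    (hmem i).resolve_left (h.radius_ne_one hi)
  have : Nonempty (Fin k) := ⟨l⟩
  refine ⟨hr₀, hr₁, range (Layout.disk hpos), ?_, ?_, ⟨_, mem_range_self (i₁, 0), hi₁⟩,
    ⟨_, mem_range_self (l, 0), hl⟩⟩
  · refine Layout.isCompactPacking_range_disk hpos hr₀ hIcc
      (fun i p hp ↦ h.dist_ge (fun j ↦ ⟨(hpos j).le, (hIcc j).2⟩) hp)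
      (N := fun i ↦ (neighbors C.contacts i).toFinset) (fun i ↦ ?_) (fun i p hp ↦ ?_) ?_
    · exact List.toFinset_nonempty_iff _ |>.2 (C.neighbors_ne_nil i)
    · exact h.dist_eq_of_mem_neighbors (List.mem_toFinset.1 hp)
    · simp only [List.mem_toFinset]
      intro i p hp
      obtain ⟨q, hq, hpq, hcross, hr⟩ := C.next i p hp
      exact ⟨q, hq, hpq, h.cross_step_pos hp hq hcross,
        hr.imp hsmall (.imp hsmall (.imp hsmall fun hC ↦
          hl ▸ h.four_lt_three_mul_sq (hpos l) (hC l)))⟩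
  · rintro _ ⟨p, rfl⟩
    exact hmem p.1

end Realizes

end Certificate

/-! ### The nine packings -/

section Examples

lemma sqrt_mem_Icc {a b x : ℝ} (hb : 0 ≤ b) (hx : x ∈ Icc (a ^ 2) (b ^ 2)) : √x ∈ Icc a b :=
  ⟨Real.le_sqrt_of_sq_le hx.1, (Real.sqrt_le_left hb).2 hx.2⟩

lemma sqrt_three_mem_Icc : √3 ∈ Icc (1.7320508 : ℝ) 1.7320509 :=
  sqrt_mem_Icc (by norm_num) ⟨by norm_num, by norm_num⟩

lemma mul_mem_Icc {a b c d s t : ℝ} (ha : 0 ≤ a) (hc : 0 ≤ c) (hs : s ∈ Icc a b)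
    (ht : t ∈ Icc c d) : s * t ∈ Icc (a * c) (b * d) :=
  ⟨mul_le_mul hs.1 ht.1 hc (ha.trans hs.1),
    mul_le_mul hs.2 ht.2 (hc.trans ht.1) (ha.trans (hs.1.trans hs.2))⟩

lemma exists_mem_Icc_eq_zero {f : ℝ → ℝ} (hf : Continuous f) {a b : ℝ} (hab : a ≤ b)
    (ha : f a ≤ 0) (hb : 0 ≤ f b) : ∃ r ∈ Icc a b, f r = 0 :=
  intermediate_value_Icc hab hf.continuousOn ⟨ha, hb⟩

/-- A period of the compact packing with ratio `r ≈ 0.6376`;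
`t = √(1 + 2r)`, `w = √(r² + 2r)`. -/
def layout₁ (r t w : ℝ) : Layout 4 ℝ where
  x := ![r, -r, 0, 0]
  y := ![0, 0, t, -t]
  radius := ![r, r, 1, 1]
  u := 2 * (r + w)
  v := r + w
  w := t + 1

/-- Rounded coordinates and contacts of `layout₁`. -/
def certificate₁ : Certificate 4 where
  x := ![6376, -6376, 0, 0]
  y := ![0, 0, 15083, -15083]
  radius := ![6376, 6376, 10000, 10000]
  u := 38686
  v := 19343
  w := 25083
  contacts := [(0, 1, 0, 0), (0, 2, 0, 0), (0, 2, 1, -1), (0, 3, 0, 0), (0, 3, 0, 1), (1, 2, 0, -1),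
    (1, 2, 0, 0), (1, 3, -1, 1), (1, 3, 0, 0), (2, 3, -1, 1), (2, 3, -1, 2), (2, 3, 0, 1)]

lemma contacts_layout₁ {r t w : ℝ} (ht : t ^ 2 = 1 + 2 * r) (hw : w ^ 2 = r ^ 2 + 2 * r)
    (h : r ^ 2 + 2 * r - 1 + r * w - t = 0) :
    ∀ e ∈ certificate₁.contacts,
      (layout₁ r t w).dx e.1 e.2 ^ 2 + (layout₁ r t w).dy e.1 e.2 ^ 2 =
        ((layout₁ r t w).radius e.1 + (layout₁ r t w).radius e.2.1) ^ 2 := by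
  simp only [certificate₁]
  intro e he
  fin_cases he <;> simp [layout₁, Layout.dx, Layout.dy] <;> grind

lemma realizes_certificate₁ {r : ℝ} (hr : r ∈ Icc 0.637555 0.637557)
    (h : r ^ 2 + 2 * r - 1 + r * √(r ^ 2 + 2 * r) - √(1 + 2 * r) = 0) :
    Realizes (layout₁ r √(1 + 2 * r) √(r ^ 2 + 2 * r)) certificate₁ := by
  have ht : √(1 + 2 * r) ^ 2 = 1 + 2 * r := Real.sq_sqrt (by linarith [hr.1])
  have hw : √(r ^ 2 + 2 * r) ^ 2 = r ^ 2 + 2 * r := Real.sq_sqrt (by nlinarith [hr.1])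
  obtain ⟨ht₁, ht₂⟩ : √(1 + 2 * r) ∈ Icc 1.508346 1.50835 :=
    sqrt_mem_Icc (by norm_num) ⟨by linarith [hr.1], by linarith [hr.2]⟩
  have hrr : r * r ∈ Icc _ _ := mul_mem_Icc (by norm_num) (by norm_num) hr hr
  obtain ⟨hw₁, hw₂⟩ : √(r ^ 2 + 2 * r) ∈ Icc 1.296759 1.296763 :=
    sqrt_mem_Icc (by norm_num) ⟨by linarith [hr.1, hrr.1], by linarith [hr.2, hrr.2]⟩
  refine ⟨?_, ?_, ?_, ?_, ?_, ?_, contacts_layout₁ ht hw h⟩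
  all_goals try (intro i; fin_cases i)
  all_goals
    rw [abs_le]
    constructor <;> norm_num [layout₁, certificate₁] <;> linarith [hr.1, hr.2]

lemma exists_mem_compactRatios₁ :
    ∃ r ∈ compactRatios, r ∈ Icc 0.637555 0.637557 := by
  obtain ⟨r, hr, h⟩ : ∃ r ∈ Icc (0.637555 : ℝ) 0.637557,
      r ^ 2 + 2 * r - 1 + r * √(r ^ 2 + 2 * r) - √(1 + 2 * r) = 0 := by
    have ht₁ : √(1 + 2 * 0.637555) ∈ Icc (1.508346 : ℝ) 1.508348 :=
      sqrt_mem_Icc (by norm_num) ⟨by norm_num, by norm_num⟩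
    have ht₂ : √(1 + 2 * 0.637557) ∈ Icc (1.508348 : ℝ) 1.508349 :=
      sqrt_mem_Icc (by norm_num) ⟨by norm_num, by norm_num⟩
    have hw₁ : √(0.637555 ^ 2 + 2 * 0.637555) ∈ Icc (1.296759 : ℝ) 1.29676 :=
      sqrt_mem_Icc (by norm_num) ⟨by norm_num, by norm_num⟩
    have hw₂ : √(0.637557 ^ 2 + 2 * 0.637557) ∈ Icc (1.296762 : ℝ) 1.296763 :=
      sqrt_mem_Icc (by norm_num) ⟨by norm_num, by norm_num⟩
    exact exists_mem_Icc_eq_zero (by fun_prop) (by norm_num) (by linarith [ht₁.1, hw₁.2])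
      (by linarith [ht₂.2, hw₂.1])
  exact ⟨r, (realizes_certificate₁ hr h).mem_compactRatios (by linarith [hr.1]) (by linarith [hr.2])
    (by simp [layout₁]), hr⟩

/-- A period of the compact packing with ratio `r ≈ 0.5452`; `s = √3`, `t = √(1 + 2r)`. -/
def layout₂ (r s t : ℝ) : Layout 6 ℝ where
  x := ![2 * r * s / 3, -r * s / 3, -r * s / 3, 2 * r * s / 3 + 1 + r,
    -r * s / 3 - 1 / 2 - r / 2, -r * s / 3 - 1 / 2 - r / 2]
  y := ![0, r, -r, 0, r + s / 2 + r * s / 2, -r - s / 2 - r * s / 2]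
  radius := ![r, r, r, 1, 1, 1]
  u := r * s + t + 1 + r
  v := (r * s + t + 1 + r) / 2
  w := (3 * r + t * s + s + r * s) / 2

/-- Rounded coordinates and contacts of `layout₂`. -/
def certificate₂ : Certificate 6 where
  x := ![6295, -3147, -3147, 21746, -10873, -10873]
  y := ![0, 5452, -5452, 0, 18833, -18833]
  radius := ![5452, 5452, 5452, 10000, 10000, 10000]
  u := 39352
  v := 19676
  w := 34080
  contacts := [(0, 1, 0, 0), (0, 2, 0, 0), (0, 3, 0, 0), (0, 4, 1, -1), (0, 5, 0, 1), (1, 2, 0, 0),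
    (1, 3, -1, 0), (1, 4, 0, 0), (1, 5, 0, 1), (2, 3, -1, 0), (2, 4, 1, -1), (2, 5, 0, 0),
    (3, 4, 1, -1), (3, 4, 1, 0), (3, 5, 0, 1), (3, 5, 1, 0), (4, 5, -1, 1), (4, 5, 0, 1)]

lemma contacts_layout₂ {r s t : ℝ} (hs : s ^ 2 = 3) (ht : t ^ 2 = 1 + 2 * r)
    (h : 2 * (1 + r) ^ 2 - 4 + (1 + r) * (r * s - t) = 0) :
    ∀ e ∈ certificate₂.contacts,
      (layout₂ r s t).dx e.1 e.2 ^ 2 + (layout₂ r s t).dy e.1 e.2 ^ 2 =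
        ((layout₂ r s t).radius e.1 + (layout₂ r s t).radius e.2.1) ^ 2 := by
  simp only [certificate₂]
  intro e he
  fin_cases he <;> simp [layout₂, Layout.dx, Layout.dy] <;> grind

lemma realizes_certificate₂ {r : ℝ} (hr : r ∈ Icc 0.545151 0.545152)
    (h : 2 * (1 + r) ^ 2 - 4 + (1 + r) * (r * √3 - √(1 + 2 * r)) = 0) :
    Realizes (layout₂ r √3 √(1 + 2 * r)) certificate₂ := by
  have hs : √3 ^ 2 = (3 : ℝ) := Real.sq_sqrt zero_le_three
  have ht : √(1 + 2 * r) ^ 2 = 1 + 2 * r := Real.sq_sqrt (by linarith [hr.1])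
  obtain ⟨hs₁, hs₂⟩ := sqrt_three_mem_Icc
  obtain ⟨hp₁, hp₂⟩ : r * √3 ∈ Icc _ _ :=
    mul_mem_Icc (by norm_num) (by norm_num) hr sqrt_three_mem_Icc
  obtain ⟨ht₁, ht₂⟩ : √(1 + 2 * r) ∈ Icc 1.445786 1.445789 :=
    sqrt_mem_Icc (by norm_num) ⟨by linarith [hr.1], by linarith [hr.2]⟩
  obtain ⟨hq₁, hq₂⟩ : √(1 + 2 * r) * √3 ∈ Icc _ _ :=
    mul_mem_Icc (by norm_num) (by norm_num) ⟨ht₁, ht₂⟩ sqrt_three_mem_Icc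
  refine ⟨?_, ?_, ?_, ?_, ?_, ?_, contacts_layout₂ hs ht h⟩
  all_goals try (intro i; fin_cases i)
  all_goals
    rw [abs_le]
    constructor <;> norm_num [layout₂, certificate₂] <;> linarith [hr.1, hr.2]

lemma exists_mem_compactRatios₂ :
    ∃ r ∈ compactRatios, r ∈ Icc 0.545151 0.545152 := by
  obtain ⟨r, hr, h⟩ : ∃ r ∈ Icc (0.545151 : ℝ) 0.545152,
      2 * (1 + r) ^ 2 - 4 + (1 + r) * (r * √3 - √(1 + 2 * r)) = 0 := by
    have ht₁ : √(1 + 2 * 0.545151) ∈ Icc (1.4457876 : ℝ) 1.4457878 :=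
      sqrt_mem_Icc (by norm_num) ⟨by norm_num, by norm_num⟩
    have ht₂ : √(1 + 2 * 0.545152) ∈ Icc (1.4457883 : ℝ) 1.4457885 :=
      sqrt_mem_Icc (by norm_num) ⟨by norm_num, by norm_num⟩
    exact exists_mem_Icc_eq_zero (by fun_prop) (by norm_num)
      (by linarith [ht₁.1, sqrt_three_mem_Icc.2]) (by linarith [ht₂.2, sqrt_three_mem_Icc.1])
  exact ⟨r, (realizes_certificate₂ hr h).mem_compactRatios (by linarith [hr.1]) (by linarith [hr.2])
    (by simp [layout₂]), hr⟩

/-- A period of the compact packing with ratio `r ≈ 0.5333`; `w = √(r² + 2r)`. -/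
def layout₃ (r w : ℝ) : Layout 3 ℝ where
  x := ![0, 1, 0]
  y := ![0, w, 1 + r]
  radius := ![1, r, r]
  u := 2
  v := 1
  w := w + 1 + r

/-- Rounded coordinates and contacts of `layout₃`. -/
def certificate₃ : Certificate 3 where
  x := ![0, 10000, 0]
  y := ![0, 11623, 15333]
  radius := ![10000, 5333, 5333]
  u := 20000
  v := 10000
  w := 26956
  contacts := [(0, 0, -1, 0), (0, 1, -1, 0), (0, 1, 0, -1), (0, 1, 0, 0), (0, 2, 0, -1),
    (0, 2, 0, 0), (0, 2, 1, -1), (1, 2, 0, 0), (1, 2, 1, 0)]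

lemma contacts_layout₃ {r w : ℝ} (hw : w ^ 2 = r ^ 2 + 2 * r)
    (h : w * (1 + r) = 1 + 2 * r - r ^ 2) :
    ∀ e ∈ certificate₃.contacts,
      (layout₃ r w).dx e.1 e.2 ^ 2 + (layout₃ r w).dy e.1 e.2 ^ 2 =
        ((layout₃ r w).radius e.1 + (layout₃ r w).radius e.2.1) ^ 2 := by
  simp only [certificate₃]
  intro e he
  fin_cases he <;> simp [layout₃, Layout.dx, Layout.dy] <;> grind

lemma realizes_certificate₃ {r : ℝ} (hr : r ∈ Icc 0.533296 0.533297)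
    (h : 8 * r ^ 3 + 3 * r ^ 2 - 2 * r - 1 = 0) :
    Realizes (layout₃ r √(r ^ 2 + 2 * r)) certificate₃ := by
  have hw : √(r ^ 2 + 2 * r) ^ 2 = r ^ 2 + 2 * r := Real.sq_sqrt (by nlinarith [hr.1])
  have hwr : √(r ^ 2 + 2 * r) * (1 + r) = 1 + 2 * r - r ^ 2 := by
    have hr₀ : 0 < 1 + r := by linarith [hr.1]
    refine (sq_eq_sq₀ (by positivity) (by nlinarith [hr.1, hr.2])).1 ?_
    linear_combination (1 + r) ^ 2 * hw + h
  have hrr : r * r ∈ Icc _ _ := mul_mem_Icc (by norm_num) (by norm_num) hr hr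
  obtain ⟨hw₁, hw₂⟩ : √(r ^ 2 + 2 * r) ∈ Icc 1.16232 1.16233 :=
    sqrt_mem_Icc (by norm_num) ⟨by linarith [hr.1, hrr.1], by linarith [hr.2, hrr.2]⟩
  refine ⟨?_, ?_, ?_, ?_, ?_, ?_, contacts_layout₃ hw hwr⟩
  all_goals try (intro i; fin_cases i)
  all_goals
    rw [abs_le]
    constructor <;> norm_num [layout₃, certificate₃] <;> linarith [hr.1, hr.2]

lemma exists_mem_compactRatios₃ :
    ∃ r ∈ compactRatios, r ∈ Icc 0.533296 0.533297 := by
  obtain ⟨r, hr, h⟩ : ∃ r ∈ Icc (0.533296 : ℝ) 0.533297,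
      8 * r ^ 3 + 3 * r ^ 2 - 2 * r - 1 = 0 := by
    exact exists_mem_Icc_eq_zero (by fun_prop) (by norm_num) (by norm_num) (by norm_num)
  exact ⟨r, (realizes_certificate₃ hr h).mem_compactRatios (by linarith [hr.1]) (by linarith [hr.2])
    (by simp [layout₃]; grind), hr⟩

/-- A period of the compact packing with ratio `r ≈ 0.4142`. -/
def layout₄ (r : ℝ) : Layout 2 ℝ where
  x := ![0, 1]
  y := ![0, 1]
  radius := ![1, r]
  u := 2
  v := 0
  w := 2

/-- Rounded coordinates and contacts of `layout₄`. -/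
def certificate₄ : Certificate 2 where
  x := ![0, 10000]
  y := ![0, 10000]
  radius := ![10000, 4142]
  u := 20000
  v := 0
  w := 20000
  contacts := [(0, 0, -1, 0), (0, 0, 0, -1), (0, 1, -1, -1), (0, 1, -1, 0), (0, 1, 0, -1),
    (0, 1, 0, 0)]

lemma contacts_layout₄ {r : ℝ} (h : (r + 1) ^ 2 - 2 = 0) :
    ∀ e ∈ certificate₄.contacts,
      (layout₄ r).dx e.1 e.2 ^ 2 + (layout₄ r).dy e.1 e.2 ^ 2 =
        ((layout₄ r).radius e.1 + (layout₄ r).radius e.2.1) ^ 2 := by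
  simp only [certificate₄]
  intro e he
  fin_cases he <;> simp [layout₄, Layout.dx, Layout.dy] <;> grind

lemma realizes_certificate₄ {r : ℝ} (hr : r ∈ Icc 0.414213 0.414214)
    (h : (r + 1) ^ 2 - 2 = 0) :
    Realizes (layout₄ r) certificate₄ := by
  refine ⟨?_, ?_, ?_, ?_, ?_, ?_, contacts_layout₄ h⟩
  all_goals try (intro i; fin_cases i)
  all_goals
    rw [abs_le]
    constructor <;> norm_num [layout₄, certificate₄] <;> linarith [hr.1, hr.2]

lemma exists_mem_compactRatios₄ :
    ∃ r ∈ compactRatios, r ∈ Icc 0.414213 0.414214 := by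
  obtain ⟨r, hr, h⟩ : ∃ r ∈ Icc (0.414213 : ℝ) 0.414214,
      (r + 1) ^ 2 - 2 = 0 := by
    exact exists_mem_Icc_eq_zero (by fun_prop) (by norm_num) (by norm_num) (by norm_num)
  exact ⟨r, (realizes_certificate₄ hr h).mem_compactRatios (by linarith [hr.1]) (by linarith [hr.2])
    (by simp [layout₄]; grind), hr⟩

/-- A period of the compact packing with ratio `r ≈ 0.3861`; `s = √3`. -/
def layout₅ (r s : ℝ) : Layout 9 ℝ where
  x := ![0, 2 * r, r, -r, -2 * r, -r, r, 0, 0]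
  y := ![0, 0, r * s, r * s, 0, -r * s, -r * s, 2, -2]
  radius := ![r, r, r, r, r, r, r, 1, 1]
  u := 2 * s
  v := s
  w := 3

/-- Rounded coordinates and contacts of `layout₅`. -/
def certificate₅ : Certificate 9 where
  x := ![0, 7722, 3861, -3861, -7722, -3861, 3861, 0, 0]
  y := ![0, 0, 6688, 6688, 0, -6688, -6688, 20000, -20000]
  radius := ![3861, 3861, 3861, 3861, 3861, 3861, 3861, 10000, 10000]
  u := 34641
  v := 17321
  w := 30000
  contacts := [(0, 1, 0, 0), (0, 2, 0, 0), (0, 3, 0, 0), (0, 4, 0, 0), (0, 5, 0, 0), (0, 6, 0, 0),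
    (1, 2, 0, 0), (1, 6, 0, 0), (1, 7, 1, -1), (1, 8, 0, 1), (2, 3, 0, 0), (2, 7, 0, 0),
    (2, 8, 0, 1), (3, 4, 0, 0), (3, 7, 0, 0), (3, 8, -1, 1), (4, 5, 0, 0), (4, 7, 0, -1),
    (4, 8, -1, 1), (5, 6, 0, 0), (5, 7, 0, -1), (5, 8, 0, 0), (6, 7, 1, -1), (6, 8, 0, 0),
    (7, 8, -1, 1), (7, 8, -1, 2), (7, 8, 0, 1)]

lemma contacts_layout₅ {r s : ℝ} (hs : s ^ 2 = 3) (h : (4 * s + 2) * r - 3 * r ^ 2 - 3 = 0) :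
    ∀ e ∈ certificate₅.contacts,
      (layout₅ r s).dx e.1 e.2 ^ 2 + (layout₅ r s).dy e.1 e.2 ^ 2 =
        ((layout₅ r s).radius e.1 + (layout₅ r s).radius e.2.1) ^ 2 := by
  simp only [certificate₅]
  intro e he
  fin_cases he <;> simp [layout₅, Layout.dx, Layout.dy] <;> grind

lemma realizes_certificate₅ {r : ℝ} (hr : r ∈ Icc 0.386106 0.386107)
    (h : (4 * √3 + 2) * r - 3 * r ^ 2 - 3 = 0) :
    Realizes (layout₅ r √3) certificate₅ := by
  have hs : √3 ^ 2 = (3 : ℝ) := Real.sq_sqrt zero_le_three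
  obtain ⟨hs₁, hs₂⟩ := sqrt_three_mem_Icc
  obtain ⟨hp₁, hp₂⟩ : r * √3 ∈ Icc _ _ :=
    mul_mem_Icc (by norm_num) (by norm_num) hr sqrt_three_mem_Icc
  refine ⟨?_, ?_, ?_, ?_, ?_, ?_, contacts_layout₅ hs h⟩
  all_goals try (intro i; fin_cases i)
  all_goals
    rw [abs_le]
    constructor <;> norm_num [layout₅, certificate₅] <;> linarith [hr.1, hr.2]

lemma exists_mem_compactRatios₅ :
    ∃ r ∈ compactRatios, r ∈ Icc 0.386106 0.386107 := by
  obtain ⟨r, hr, h⟩ : ∃ r ∈ Icc (0.386106 : ℝ) 0.386107,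
      (4 * √3 + 2) * r - 3 * r ^ 2 - 3 = 0 := by
    exact exists_mem_Icc_eq_zero (by fun_prop) (by norm_num)
      (by linarith [sqrt_three_mem_Icc.1, sqrt_three_mem_Icc.2])
      (by linarith [sqrt_three_mem_Icc.1, sqrt_three_mem_Icc.2])
  exact ⟨r, (realizes_certificate₅ hr h).mem_compactRatios (by linarith [hr.1]) (by linarith [hr.2])
    (by simp [layout₅]), hr⟩

/-- A period of the compact packing with ratio `r ≈ 0.3492`; `s = √3`. -/
def layout₆ (r s : ℝ) : Layout 7 ℝ where
  x := ![0, 2 * r + r * s, 2 * r + r * s, r + r * s, r, r + r * s, r]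
  y := ![0, r, -r, r + r * s, 2 * r + r * s, -r - r * s, -2 * r - r * s]
  radius := ![1, r, r, r, r, r, r]
  u := 2 * (2 * r + r * s)
  v := 2 * r + r * s
  w := 2 * r * s + 3 * r

/-- Rounded coordinates and contacts of `layout₆`. -/
def certificate₆ : Certificate 7 where
  x := ![0, 13032, 13032, 9540, 3492, 9540, 3492]
  y := ![0, 3492, -3492, 9540, 13032, -9540, -13032]
  radius := ![10000, 3492, 3492, 3492, 3492, 3492, 3492]
  u := 26065
  v := 13032
  w := 22573
  contacts := [(0, 1, -1, 0), (0, 1, 0, 0), (0, 2, -1, 0), (0, 2, 0, 0), (0, 3, 0, -1),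
    (0, 3, 0, 0), (0, 4, 0, -1), (0, 4, 0, 0), (0, 5, -1, 1), (0, 5, 0, 0), (0, 6, -1, 1),
    (0, 6, 0, 0), (1, 2, 0, 0), (1, 3, 0, 0), (1, 6, 0, 1), (2, 4, 1, -1), (2, 5, 0, 0),
    (3, 4, 0, 0), (3, 6, 0, 1), (4, 5, -1, 1), (5, 6, 0, 0)]

lemma contacts_layout₆ {r s : ℝ} (hs : s ^ 2 = 3) (h : (7 + 4 * s) * r ^ 2 - 2 * r - 1 = 0) :
    ∀ e ∈ certificate₆.contacts,
      (layout₆ r s).dx e.1 e.2 ^ 2 + (layout₆ r s).dy e.1 e.2 ^ 2 =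
        ((layout₆ r s).radius e.1 + (layout₆ r s).radius e.2.1) ^ 2 := by
  simp only [certificate₆]
  intro e he
  fin_cases he <;> simp [layout₆, Layout.dx, Layout.dy] <;> grind

lemma realizes_certificate₆ {r : ℝ} (hr : r ∈ Icc 0.349198 0.349199)
    (h : (7 + 4 * √3) * r ^ 2 - 2 * r - 1 = 0) :
    Realizes (layout₆ r √3) certificate₆ := by
  have hs : √3 ^ 2 = (3 : ℝ) := Real.sq_sqrt zero_le_three
  obtain ⟨hp₁, hp₂⟩ : r * √3 ∈ Icc _ _ :=
    mul_mem_Icc (by norm_num) (by norm_num) hr sqrt_three_mem_Icc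
  refine ⟨?_, ?_, ?_, ?_, ?_, ?_, contacts_layout₆ hs h⟩
  all_goals try (intro i; fin_cases i)
  all_goals
    rw [abs_le]
    constructor <;> norm_num [layout₆, certificate₆] <;> linarith [hr.1, hr.2]

lemma exists_mem_compactRatios₆ :
    ∃ r ∈ compactRatios, r ∈ Icc 0.349198 0.349199 := by
  obtain ⟨r, hr, h⟩ : ∃ r ∈ Icc (0.349198 : ℝ) 0.349199,
      (7 + 4 * √3) * r ^ 2 - 2 * r - 1 = 0 := by
    exact exists_mem_Icc_eq_zero (by fun_prop) (by norm_num)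
      (by linarith [sqrt_three_mem_Icc.1, sqrt_three_mem_Icc.2])
      (by linarith [sqrt_three_mem_Icc.1, sqrt_three_mem_Icc.2])
  exact ⟨r, (realizes_certificate₆ hr h).mem_compactRatios (by linarith [hr.1]) (by linarith [hr.2])
    (by simp [layout₆]; grind), hr⟩

/-- A period of the compact packing with ratio `r ≈ 0.2808`; `t = √(1 + 2r)`. -/
def layout₇ (r t : ℝ) : Layout 3 ℝ where
  x := ![0, 0, 0]
  y := ![0, 1 + r, 1 + 3 * r]
  radius := ![1, r, r]
  u := 2 * t
  v := t
  w := 1 + 2 * r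

/-- Rounded coordinates and contacts of `layout₇`. -/
def certificate₇ : Certificate 3 where
  x := ![0, 0, 0]
  y := ![0, 12808, 18423]
  radius := ![10000, 2808, 2808]
  u := 24992
  v := 12496
  w := 15616
  contacts := [(0, 0, -1, 1), (0, 0, 0, -1), (0, 1, 0, -1), (0, 1, 0, 0), (0, 1, 1, -1),
    (0, 2, 0, -1), (0, 2, 1, -2), (0, 2, 1, -1), (1, 2, 0, 0)]

lemma contacts_layout₇ {r t : ℝ} (ht : t ^ 2 = 1 + 2 * r) (h : 2 * r ^ 2 + 3 * r - 1 = 0) :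
    ∀ e ∈ certificate₇.contacts,
      (layout₇ r t).dx e.1 e.2 ^ 2 + (layout₇ r t).dy e.1 e.2 ^ 2 =
        ((layout₇ r t).radius e.1 + (layout₇ r t).radius e.2.1) ^ 2 := by
  simp only [certificate₇]
  intro e he
  fin_cases he <;> simp [layout₇, Layout.dx, Layout.dy] <;> grind

lemma realizes_certificate₇ {r : ℝ} (hr : r ∈ Icc 0.280776 0.280777)
    (h : 2 * r ^ 2 + 3 * r - 1 = 0) :
    Realizes (layout₇ r √(1 + 2 * r)) certificate₇ := by
  have ht : √(1 + 2 * r) ^ 2 = 1 + 2 * r := Real.sq_sqrt (by linarith [hr.1])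
  obtain ⟨ht₁, ht₂⟩ : √(1 + 2 * r) ∈ Icc 1.24962 1.249623 :=
    sqrt_mem_Icc (by norm_num) ⟨by linarith [hr.1], by linarith [hr.2]⟩
  refine ⟨?_, ?_, ?_, ?_, ?_, ?_, contacts_layout₇ ht h⟩
  all_goals try (intro i; fin_cases i)
  all_goals
    rw [abs_le]
    constructor <;> norm_num [layout₇, certificate₇] <;> linarith [hr.1, hr.2]

lemma exists_mem_compactRatios₇ :
    ∃ r ∈ compactRatios, r ∈ Icc 0.280776 0.280777 := by
  obtain ⟨r, hr, h⟩ : ∃ r ∈ Icc (0.280776 : ℝ) 0.280777,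
      2 * r ^ 2 + 3 * r - 1 = 0 := by
    exact exists_mem_Icc_eq_zero (by fun_prop) (by norm_num) (by norm_num) (by norm_num)
  exact ⟨r, (realizes_certificate₇ hr h).mem_compactRatios (by linarith [hr.1]) (by linarith [hr.2])
    (by simp [layout₇]; grind), hr⟩

/-- A period of the compact packing with ratio `r ≈ 0.1547`; `s = √3`. -/
def layout₈ (r s : ℝ) : Layout 3 ℝ where
  x := ![0, 1, 0]
  y := ![0, s / 3, 2 * s / 3]
  radius := ![1, r, r]
  u := 2
  v := 1
  w := s

/-- Rounded coordinates and contacts of `layout₈`. -/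
def certificate₈ : Certificate 3 where
  x := ![0, 10000, 0]
  y := ![0, 5774, 11547]
  radius := ![10000, 1547, 1547]
  u := 20000
  v := 10000
  w := 17321
  contacts := [(0, 0, -1, 0), (0, 0, -1, 1), (0, 0, 0, -1), (0, 1, -1, 0), (0, 1, 0, -1),
    (0, 1, 0, 0), (0, 2, 0, -1), (0, 2, 0, 0), (0, 2, 1, -1)]

lemma contacts_layout₈ {r s : ℝ} (hs : s ^ 2 = 3) (h : r - (2 * s / 3 - 1) = 0) :
    ∀ e ∈ certificate₈.contacts,
      (layout₈ r s).dx e.1 e.2 ^ 2 + (layout₈ r s).dy e.1 e.2 ^ 2 =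
        ((layout₈ r s).radius e.1 + (layout₈ r s).radius e.2.1) ^ 2 := by
  simp only [certificate₈]
  intro e he
  fin_cases he <;> simp [layout₈, Layout.dx, Layout.dy] <;> grind

lemma realizes_certificate₈ {r : ℝ} (hr : r ∈ Icc 0.154700 0.154701)
    (h : r - (2 * √3 / 3 - 1) = 0) :
    Realizes (layout₈ r √3) certificate₈ := by
  have hs : √3 ^ 2 = (3 : ℝ) := Real.sq_sqrt zero_le_three
  obtain ⟨hs₁, hs₂⟩ := sqrt_three_mem_Icc
  refine ⟨?_, ?_, ?_, ?_, ?_, ?_, contacts_layout₈ hs h⟩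
  all_goals try (intro i; fin_cases i)
  all_goals
    rw [abs_le]
    constructor <;> norm_num [layout₈, certificate₈] <;> linarith [hr.1, hr.2]

lemma exists_mem_compactRatios₈ :
    ∃ r ∈ compactRatios, r ∈ Icc 0.154700 0.154701 := by
  obtain ⟨r, hr, h⟩ : ∃ r ∈ Icc (0.154700 : ℝ) 0.154701,
      r - (2 * √3 / 3 - 1) = 0 := by
    exact ⟨2 * √3 / 3 - 1, ⟨by linarith [sqrt_three_mem_Icc.1], by linarith [sqrt_three_mem_Icc.2]⟩,
      sub_self _⟩
  exact ⟨r, (realizes_certificate₈ hr h).mem_compactRatios (by linarith [hr.1]) (by linarith [hr.2])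
    (by simp [layout₈]; grind), hr⟩

/-- A period of the compact packing with ratio `r ≈ 0.1010`; `s = √3`. -/
def layout₉ (r s : ℝ) : Layout 7 ℝ where
  x := ![0, 1, 1 + r, 1 - r, 0, r, -r]
  y := ![0, s / 3 - 2 * r * s / 3, s / 3 + r * s / 3, s / 3 + r * s / 3,
    2 * s / 3 + 2 * r * s / 3, 2 * s / 3 - r * s / 3, 2 * s / 3 - r * s / 3]
  radius := ![1, r, r, r, r, r, r]
  u := 2
  v := 1
  w := s

/-- Rounded coordinates and contacts of `layout₉`. -/
def certificate₉ : Certificate 7 where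
  x := ![0, 10000, 11010, 8990, 0, 1010, -1010]
  y := ![0, 4607, 6357, 6357, 12713, 10964, 10964]
  radius := ![10000, 1010, 1010, 1010, 1010, 1010, 1010]
  u := 20000
  v := 10000
  w := 17321
  contacts := [(0, 0, -1, 0), (0, 0, -1, 1), (0, 0, 0, -1), (0, 1, -1, 0), (0, 1, 0, 0),
    (0, 2, -1, 0), (0, 2, 0, -1), (0, 3, 0, -1), (0, 3, 0, 0), (0, 4, 0, -1), (0, 4, 1, -1),
    (0, 5, 0, -1), (0, 5, 0, 0), (0, 6, 0, 0), (0, 6, 1, -1), (1, 2, 0, 0), (1, 3, 0, 0),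
    (2, 3, 0, 0), (4, 5, 0, 0), (4, 6, 0, 0), (5, 6, 0, 0)]

lemma contacts_layout₉ {r s : ℝ} (hs : s ^ 2 = 3) (h : 10 * r - r ^ 2 - 1 = 0) :
    ∀ e ∈ certificate₉.contacts,
      (layout₉ r s).dx e.1 e.2 ^ 2 + (layout₉ r s).dy e.1 e.2 ^ 2 =
        ((layout₉ r s).radius e.1 + (layout₉ r s).radius e.2.1) ^ 2 := by
  simp only [certificate₉]
  intro e he
  fin_cases he <;> simp [layout₉, Layout.dx, Layout.dy] <;> grind

lemma realizes_certificate₉ {r : ℝ} (hr : r ∈ Icc 0.101020 0.101021)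
    (h : 10 * r - r ^ 2 - 1 = 0) :
    Realizes (layout₉ r √3) certificate₉ := by
  have hs : √3 ^ 2 = (3 : ℝ) := Real.sq_sqrt zero_le_three
  obtain ⟨hs₁, hs₂⟩ := sqrt_three_mem_Icc
  obtain ⟨hp₁, hp₂⟩ : r * √3 ∈ Icc _ _ :=
    mul_mem_Icc (by norm_num) (by norm_num) hr sqrt_three_mem_Icc
  refine ⟨?_, ?_, ?_, ?_, ?_, ?_, contacts_layout₉ hs h⟩
  all_goals try (intro i; fin_cases i)
  all_goals
    rw [abs_le]
    constructor <;> norm_num [layout₉, certificate₉] <;> linarith [hr.1, hr.2]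

lemma exists_mem_compactRatios₉ :
    ∃ r ∈ compactRatios, r ∈ Icc 0.101020 0.101021 := by
  obtain ⟨r, hr, h⟩ : ∃ r ∈ Icc (0.101020 : ℝ) 0.101021,
      10 * r - r ^ 2 - 1 = 0 := by
    exact exists_mem_Icc_eq_zero (by fun_prop) (by norm_num) (by norm_num) (by norm_num)
  exact ⟨r, (realizes_certificate₉ hr h).mem_compactRatios (by linarith [hr.1]) (by linarith [hr.2])
    (by simp [layout₉]; grind), hr⟩

lemma nine_le_ncard_compactRatios : 9 ≤ compactRatios.ncard := by
  obtain ⟨r₁, h₁, l₁, -⟩ := exists_mem_compactRatios₁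
  obtain ⟨r₂, h₂, l₂, u₂⟩ := exists_mem_compactRatios₂
  obtain ⟨r₃, h₃, l₃, u₃⟩ := exists_mem_compactRatios₃
  obtain ⟨r₄, h₄, l₄, u₄⟩ := exists_mem_compactRatios₄
  obtain ⟨r₅, h₅, l₅, u₅⟩ := exists_mem_compactRatios₅
  obtain ⟨r₆, h₆, l₆, u₆⟩ := exists_mem_compactRatios₆
  obtain ⟨r₇, h₇, l₇, u₇⟩ := exists_mem_compactRatios₇
  obtain ⟨r₈, h₈, l₈, u₈⟩ := exists_mem_compactRatios₈
  obtain ⟨r₉, h₉, -, u₉⟩ := exists_mem_compactRatios₉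
  have hmono : StrictMono ![r₉, r₈, r₇, r₆, r₅, r₄, r₃, r₂, r₁] := by
    rw [Fin.strictMono_iff_lt_succ]
    intro i
    fin_cases i <;> simp <;> linarith
  have hsub : range ![r₉, r₈, r₇, r₆, r₅, r₄, r₃, r₂, r₁] ⊆ compactRatios := by
    simp [insert_subset_iff, *]
  calc
    9 = (range ![r₉, r₈, r₇, r₆, r₅, r₄, r₃, r₂, r₁]).ncard := by
      rw [← image_univ, ncard_image_of_injective _ hmono.injective, ncard_univ, Nat.card_fin]
    _ ≤ compactRatios.ncard := ncard_le_ncard hsub finite_compactRatios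

end Examples

end

/-- there are exactly 9 values of `r` with `0 < r < 1` allowing a
compact packing by disks of radii `1` and `r` using both radii. -/
theorem nine_binary_compact_ratios :
    {r : ℝ | 0 < r ∧ r < 1 ∧
      ∃ P : Set Disk, IsCompactPacking P ∧ RadiiIn P {1, r} ∧
        UsesRadius P 1 ∧ UsesRadius P r}.ncard = 9 :=
  le_antisymm ncard_compactRatios_le nine_le_ncard_compactRatios
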